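/- For Thompson's group F, the vanishing Hb^n(F, E) = 0 holds for all n ≥ 1 and all separable dual Banach F-modules E. -/

import Mathlib

open scoped BigOperators

/-- A cochain (function into a normed space) is bounded if its norms are uniformly bounded. -/
def IsBddCochain {G : Type*} {E : Type*} [NormedAddCommGroup E] {n : ℕ}
    (f : (Fin n → G) → E) : Prop :=
  ∃ C : ℝ, ∀ g, ‖f g‖ ≤ C

/-- The inhomogeneous coboundary operator of bounded cohomology, for an action `π` of
`G` on `E`:
`(δf)(g₁,…,g_{n+1}) = g₁•f(g₂,…,g_{n+1}) + ∑_{i=1}^{n} (−1)^i f(g₁,…,g_i·g_{i+1},…,g_{n+1})`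
`+ (−1)^{n+1} f(g₁,…,g_n)`. -/
def bddDelta {G : Type*} [Group G] {E : Type*} [NormedAddCommGroup E] [Module ℝ E]
    (π : G → E → E) (n : ℕ) (f : (Fin n → G) → E) : (Fin (n + 1) → G) → E :=
  fun g =>
    π (g 0) (f (fun j => g j.succ)) +
    (∑ i : Fin n, ((-1 : ℝ) ^ ((i : ℕ) + 1)) •
      f (fun j => if (j : ℕ) < (i : ℕ) then g (Fin.castSucc j)
        else if (j : ℕ) = (i : ℕ) then g (Fin.castSucc j) * g j.succ
        else g j.succ)) +
    ((-1 : ℝ) ^ (n + 1)) • f (fun j => g (Fin.castSucc j))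

/-- Vanishing of the bounded cohomology `Hb^n(G,E)` for all `n ≥ 1`, with respect to the
`G`-action `π` on `E`: every bounded cocycle of degree `n ≥ 1` is the coboundary of a
bounded cochain. -/
def HbVanish {G : Type*} [Group G] {E : Type*} [NormedAddCommGroup E] [Module ℝ E]
    (π : G → E → E) : Prop :=
  ∀ (n : ℕ) (f : (Fin (n + 1) → G) → E), IsBddCochain f →
    bddDelta π (n + 1) f = 0 →
    ∃ b : (Fin n → G) → E, IsBddCochain b ∧ bddDelta π n b = f

/-- A group is boundedly acyclic if `Hb^n(G,ℝ) = 0` for all `n ≥ 1`, where `ℝ` carries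
the trivial `G`-action. -/
def BoundedlyAcyclic (G : Type*) [Group G] : Prop :=
  HbVanish (G := G) (E := ℝ) (fun _ v => v)

/-- A real number is a dyadic rational if it is of the form `a / 2 ^ b` with `a`, `b`
integers. -/
def IsDyadic (r : ℝ) : Prop := ∃ (a : ℤ) (b : ℕ), r = a / 2 ^ b

/-- A permutation of `[0,1]` belongs to Thompson's group `F` iff it is an increasing
bijection which is piecewise affine with finitely many breakpoints, all breakpoints
being dyadic rationals and all slopes being integer powers of `2`.  (Such a map is
automatically a homeomorphism of `[0,1]`.) -/
def IsThompson (f : Equiv.Perm ↥(Set.Icc (0 : ℝ) 1)) : Prop :=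
  StrictMono (fun x => (f x : ℝ)) ∧
  ∃ s : Finset ℝ, (∀ q ∈ s, IsDyadic q) ∧
    ∀ x y : ↥(Set.Icc (0 : ℝ) 1), (x : ℝ) ≤ y →
      (∀ q ∈ s, q ∉ Set.Ioo (x : ℝ) (y : ℝ)) →
      ∃ m : ℤ, ∀ t : ↥(Set.Icc (0 : ℝ) 1), (t : ℝ) ∈ Set.Icc (x : ℝ) (y : ℝ) →
        (f t : ℝ) = (f x : ℝ) + (2 : ℝ) ^ m * ((t : ℝ) - (x : ℝ))

/-- The contragredient action of `G` on the continuous dual of `F` induced by an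
isometric action `ρ` of `G` on `F`: `(g • φ)(v) = φ (g⁻¹ • v)`. -/
def contragredient {G : Type*} [Group G] {F : Type*} [NormedAddCommGroup F]
    [NormedSpace ℝ F] (ρ : G →* (F ≃ₗᵢ[ℝ] F)) : G → (F →L[ℝ] ℝ) → (F →L[ℝ] ℝ) :=
  fun g φ => φ.comp (ρ g⁻¹).toLinearIsometry.toContinuousLinearMap

/-!
A cocycle is regarded as an equivariant function on the simplices of the full simplex on the vertex
set `G`. Replacing the vertices by independent random vertices, equivariantly, changes it by the
coboundary of a bounded equivariant cochain, and the weak-* closed convex hull of the cocycles so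
obtained is compact.

Let a finite subset `S` of a subgroup `K` commute with its conjugates by the positive powers of some
`t`. By the Markov–Kakutani theorem the hull contains a cocycle which is invariant under right
multiplication of the vertices by `t`, and under right multiplication of the vertices by independent
uniform random elements of `t ^ j * S * t ^ (-j)`, for every integer `j`. On tuples it is a bounded
harmonic function for a random walk of lamplighter type, and separability of the coefficients forces
it to be constant on the tuples of elements of `S`: multiplication at one site can be shifted to a
site far away, where it has almost no effect. By compactness some cocycle in the hull is constant on
the tuples of elements of `K`, and pulling back by a `K`-equivariant retraction `G → K` yields a
bounded `K`-equivariant primitive. If `G ⧸ K` is abelian, then, by Markov–Kakutani again, there is a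
bounded `G`-equivariant one.

In Thompson's group the germs of the elements at `0` and at `1` are linear, so the elements of the
commutator subgroup are the identity near `0` and near `1`; hence a large power of an element that
moves all the interior points to the right moves their supports off themselves.
-/

namespace BoundedCohomology

open Filter Topology
open scoped commutatorElement

/-! ### Fixed points and finite averages -/

section MarkovKakutani

variable {V : Type*} [AddCommGroup V] [Module ℝ V] [TopologicalSpace V]
  [IsTopologicalAddGroup V] [ContinuousSMul ℝ V] [T2Space V]

theorem exists_map_eq_self_of_isCompact_of_convex {X : Set V} (hX : IsCompact X)
    (hconv : Convex ℝ X) (hne : X.Nonempty) (A : V →L[ℝ] V) (hA : Set.MapsTo A X X) :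
    ∃ x ∈ X, A x = x := by
  obtain ⟨x₀, hx₀⟩ := hne
  have horbit (n : ℕ) : A^[n] x₀ ∈ X := hA.iterate n hx₀
  let avg (n : ℕ) : V := birkhoffAverage ℝ A id (n + 1) x₀
  have havg (n : ℕ) : avg n ∈ X := by
    simp only [avg, birkhoffAverage, birkhoffSum, id_eq, Finset.smul_sum]
    refine hconv.sum_mem (fun _ _ ↦ by positivity) ?_ fun i _ ↦ horbit i
    simp [mul_inv_cancel₀ (Nat.cast_add_one_ne_zero (R := ℝ) n)]
  have hdefect (n : ℕ) : A (avg n) - avg n =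
      ((n + 1 : ℕ) : ℝ)⁻¹ • A^[n + 1] x₀ - ((n + 1 : ℕ) : ℝ)⁻¹ • x₀ := by
    have hmap : A (avg n) = birkhoffAverage ℝ A id (n + 1) (A x₀) := by
      simp only [avg, birkhoffAverage, birkhoffSum, id_eq, map_smul, map_sum,
        ← Function.iterate_succ_apply, Function.iterate_succ_apply']
    rw [hmap, birkhoffAverage_apply_sub_birkhoffAverage, smul_sub, id_eq, id_eq]
  have hdefect_lim : Tendsto (fun n ↦ A (avg n) - avg n) atTop (𝓝 0) := by
    have hinv : Tendsto (fun n : ℕ ↦ ((n + 1 : ℕ) : ℝ)⁻¹) atTop (𝓝 0) :=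
      (tendsto_inv_atTop_nhds_zero_nat (𝕜 := ℝ)).comp (tendsto_add_atTop_nat 1)
    have hbdd := hX.isVonNBounded ℝ
    have hlast := hbdd.smul_tendsto_zero (Eventually.of_forall fun n ↦ horbit (n + 1)) hinv
    have hfirst := hbdd.smul_tendsto_zero (Eventually.of_forall fun _ ↦ hx₀) hinv
    simpa only [hdefect, sub_zero, Pi.smul_apply'] using hlast.sub hfirst
  obtain ⟨x, hx, hcluster⟩ := hX (f := map avg atTop)
    (le_principal_iff.2 (mem_map.2 (Eventually.of_forall havg)))
  have hcluster' : ClusterPt (A x - x) (𝓝 0) :=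
    (hcluster.map (A.continuous.sub continuous_id).continuousAt tendsto_map).mono
      hdefect_lim
  exact ⟨x, hx, sub_eq_zero.1 (eq_of_nhds_neBot hcluster')⟩

/-- The **Markov–Kakutani fixed point theorem**. -/
theorem exists_forall_map_eq_self_of_isCompact_of_convex {I : Type*} {X : Set V}
    (hX : IsCompact X) (hconv : Convex ℝ X) (hne : X.Nonempty) (A : I → V →L[ℝ] V)
    (hA : ∀ i, Set.MapsTo (A i) X X) (hcomm : ∀ i j, ∀ x ∈ X, A i (A j x) = A j (A i x)) :
    ∃ x ∈ X, ∀ i, A i x = x := by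
  let fixed (i : I) : Set V := {x | A i x = x}
  have hclosed (i : I) : IsClosed (fixed i) := isClosed_eq (A i).continuous continuous_id
  have hconvex (i : I) : Convex ℝ (fixed i) := by
    intro x hx y hy a b _ _ _
    simp only [fixed, Set.mem_ofPred_eq, map_add, map_smul] at hx hy ⊢
    rw [hx, hy]
  have hfinite (s : Finset I) : (X ∩ ⋂ i ∈ s, fixed i).Nonempty := by
    classical
    induction s using Finset.induction_on with
    | empty => simpa using hne
    | insert j s _ ih =>
      have hmaps : Set.MapsTo (A j) (X ∩ ⋂ i ∈ s, fixed i) (X ∩ ⋂ i ∈ s, fixed i) := by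
        rintro x ⟨hx, hfix⟩
        refine ⟨hA j hx, Set.mem_iInter₂.2 fun i hi ↦ ?_⟩
        exact (hcomm i j x hx).trans (congrArg (A j) (Set.mem_iInter₂.1 hfix i hi))
      obtain ⟨x, ⟨hx, hfix⟩, hj⟩ := exists_map_eq_self_of_isCompact_of_convex
        (hX.inter_right (isClosed_biInter fun i _ ↦ hclosed i))
        (hconv.inter (convex_iInter₂ fun i _ ↦ hconvex i)) ih (A j) hmaps
      exact ⟨x, hx, by simpa [fixed, hj] using hfix⟩
  obtain ⟨x, hx, hfix⟩ := hX.inter_iInter_nonempty fixed hclosed hfinite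
  exact ⟨x, hx, fun i ↦ Set.mem_iInter.1 hfix i⟩

end MarkovKakutani

section UniformMean

variable {ι : Type*} [Fintype ι] {V : Type*} [AddCommGroup V] [Module ℝ V]

/-- The average of a finite family of vectors, uniformly weighted; it is `0` for the empty
family. -/
noncomputable def uniformMean (v : ι → V) : V := (Fintype.card ι : ℝ)⁻¹ • ∑ i, v i

theorem map_uniformMean {W : Type*} [AddCommGroup W] [Module ℝ W] (T : V →ₗ[ℝ] W) (v : ι → V) :
    T (uniformMean v) = uniformMean fun i ↦ T (v i) := by
  simp [uniformMean]

theorem uniformMean_const [Nonempty ι] (v : V) : uniformMean (fun _ : ι ↦ v) = v := by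
  simp [uniformMean, ← Nat.cast_smul_eq_nsmul ℝ]

theorem uniformMean_mem [Nonempty ι] {s : Set V} (hs : Convex ℝ s) {v : ι → V}
    (hv : ∀ i, v i ∈ s) : uniformMean v ∈ s := by
  rw [uniformMean, Finset.smul_sum]
  exact hs.sum_mem (fun _ _ ↦ by positivity) (by simp) fun i _ ↦ hv i

theorem uniformMean_comm {κ : Type*} [Fintype κ] (v : ι → κ → V) :
    uniformMean (fun i ↦ uniformMean (v i)) = uniformMean fun k ↦ uniformMean fun i ↦ v i k := by
  simp only [uniformMean, ← Finset.smul_sum]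
  rw [smul_comm, Finset.sum_comm]

theorem uniformMean_comp_equiv {κ : Type*} [Fintype κ] (e : κ ≃ ι) (v : ι → V) :
    uniformMean (fun k ↦ v (e k)) = uniformMean v := by
  rw [uniformMean, uniformMean, Fintype.card_congr e, e.sum_comp]

theorem uniformMean_mul_uniformMean {A κ : Type*} [Ring A] [Algebra ℝ A] [Fintype κ] (v : ι → A)
    (w : κ → A) :
    uniformMean v * uniformMean w = uniformMean fun p : ι × κ ↦ v p.1 * w p.2 := by
  rw [uniformMean, uniformMean, uniformMean, smul_mul_smul_comm, Finset.sum_mul_sum,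
    Fintype.sum_prod_type, Fintype.card_prod, Nat.cast_mul, mul_inv]

end UniformMean

/-! ### Simplicial chains and random substitutions -/

section Chains

variable {G : Type*} {W : Type*} [AddCommGroup W] [Module ℝ W]

/-- The real vector space with basis the finite words in `G`. A word of length `n + 1` is an
`n`-simplex of the full simplex on the vertex set `G`, so this is its augmented chain complex, all
degrees together; multiplication is concatenation of words. -/
abbrev Chain (G : Type*) := MonoidAlgebra ℝ (FreeMonoid G)

/-- The basis chain given by a word. -/
noncomputable def word (x : List G) : Chain G := MonoidAlgebra.of ℝ _ (FreeMonoid.ofList x)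

/-- The basis chain given by a one-letter word. -/
noncomputable abbrev letter (a : G) : Chain G := word [a]

@[simp]
theorem word_nil : word ([] : List G) = 1 := map_one (MonoidAlgebra.of ℝ (FreeMonoid G))

theorem word_append (x y : List G) : word (x ++ y) = word x * word y :=
  map_mul (MonoidAlgebra.of ℝ (FreeMonoid G)) (FreeMonoid.ofList x) (FreeMonoid.ofList y)

theorem word_cons (a : G) (x : List G) : word (a :: x) = letter a * word x := word_append [a] x

/-- Linear extension of a function on words to chains. -/
noncomputable def extend : (List G → W) ≃ₗ[ℝ] (Chain G →ₗ[ℝ] W) :=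
  (MonoidAlgebra.basis (FreeMonoid G) ℝ).constr ℝ

@[simp]
theorem extend_word (c : List G → W) (x : List G) : extend c (word x) = c x :=
  (MonoidAlgebra.basis (FreeMonoid G) ℝ).constr_basis ℝ c x

theorem chain_hom_ext {S T : Chain G →ₗ[ℝ] W} (h : ∀ x, S (word x) = T (word x)) : S = T :=
  (MonoidAlgebra.basis (FreeMonoid G) ℝ).ext h

theorem map_extend {W' : Type*} [AddCommGroup W'] [Module ℝ W'] (T : W →ₗ[ℝ] W') (c : List G → W)
    (z : Chain G) : T (extend c z) = extend (fun x ↦ T (c x)) z :=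
  LinearMap.congr_fun (chain_hom_ext (S := T ∘ₗ extend c) fun x ↦ by simp) z

theorem extend_letter_mul (c : List G → W) (a : G) (z : Chain G) :
    extend c (letter a * z) = extend (fun x ↦ c (a :: x)) z :=
  LinearMap.congr_fun
    (chain_hom_ext (S := extend c ∘ₗ LinearMap.mulLeft ℝ (letter a)) fun x ↦ by
      simp [← word_cons]) z

/-- The boundary of a word: the alternating sum of the words with one letter deleted. -/
noncomputable def boundaryWord : List G → Chain G
  | [] => 0
  | a :: x => word x - letter a * boundaryWord x

/-- The simplicial boundary. -/
noncomputable def boundary : Chain G →ₗ[ℝ] Chain G := extend boundaryWord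

@[simp]
theorem boundary_one : boundary (1 : Chain G) = 0 := by
  rw [← word_nil, boundary, extend_word, boundaryWord]

theorem boundary_letter_mul (a : G) (z : Chain G) :
    boundary (letter a * z) = z - letter a * boundary z := by
  have hword : boundary ∘ₗ LinearMap.mulLeft ℝ (letter a) =
      LinearMap.id - LinearMap.mulLeft ℝ (letter a) ∘ₗ boundary :=
    chain_hom_ext fun x ↦ by simp [← word_cons, boundary, boundaryWord]
  simpa using LinearMap.congr_fun hword z

theorem boundary_mul_of_mem_convexHull {m : Chain G}
    (hm : m ∈ convexHull ℝ (Set.range (letter : G → Chain G))) (z : Chain G) :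
    boundary (m * z) = z - m * boundary z := by
  refine convexHull_min (t := {m | boundary (m * z) = z - m * boundary z}) ?_ ?_ hm
  · rintro _ ⟨a, rfl⟩
    exact boundary_letter_mul a z
  · intro m hm m' hm' r s _ _ hrs
    obtain rfl : s = 1 - r := eq_sub_of_add_eq' hrs
    simp only [Set.mem_ofPred_eq] at hm hm' ⊢
    rw [add_mul, smul_mul_assoc, smul_mul_assoc, map_add, map_smul, map_smul, hm, hm', add_mul,
      smul_mul_assoc, smul_mul_assoc]
    module

/-- The algebra endomorphism replacing every letter `a` by `μ a`. -/
noncomputable def subst (μ : G → Chain G) : Chain G →ₐ[ℝ] Chain G :=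
  MonoidAlgebra.lift ℝ (Chain G) (FreeMonoid G) (FreeMonoid.lift μ)

@[simp]
theorem subst_letter (μ : G → Chain G) (a : G) : subst μ (letter a) = μ a := by
  simp [subst, letter, word]

theorem subst_word_cons (μ : G → Chain G) (a : G) (x : List G) :
    subst μ (word (a :: x)) = μ a * subst μ (word x) := by
  rw [word_cons, map_mul, subst_letter]

theorem subst_letter_comp_word (r : G → G) (x : List G) :
    subst (fun a ↦ letter (r a)) (word x) = word (x.map r) := by
  induction x with
  | nil => simp
  | cons a x ih => rw [subst_word_cons, ih, List.map_cons, ← word_cons]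

theorem subst_ext {S T : Chain G →ₐ[ℝ] Chain G} (h : ∀ a, S (letter a) = T (letter a)) : S = T :=
  MonoidAlgebra.algHom_ext' (FreeMonoid.hom_eq h) (by ext)

theorem subst_comp_subst (μ ν : G → Chain G) :
    (subst ν).comp (subst μ) = subst fun a ↦ subst ν (μ a) :=
  subst_ext fun a ↦ by simp

/-- A random substitution: each letter is replaced by a random letter, independently at the
different places of a word. -/
def IsRandom (μ : G → Chain G) : Prop := ∀ a, μ a ∈ convexHull ℝ (Set.range letter)

theorem isRandom_letter_comp (r : G → G) : IsRandom fun a ↦ letter (r a) :=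
  fun a ↦ subset_convexHull ℝ _ ⟨r a, rfl⟩

theorem IsRandom.subst_comp {μ ν : G → Chain G} (hμ : IsRandom μ) (hν : IsRandom ν) :
    IsRandom fun a ↦ subst ν (μ a) := fun a ↦ by
  refine convexHull_min (t := (subst ν).toLinearMap ⁻¹' _) ?_
    ((convex_convexHull ℝ _).linear_preimage _) (hμ a)
  rintro _ ⟨b, rfl⟩
  simpa using hν b

theorem boundary_subst {μ : G → Chain G} (hμ : IsRandom μ) (z : Chain G) :
    boundary (subst μ z) = subst μ (boundary z) := by
  refine LinearMap.congr_fun (chain_hom_ext (S := boundary ∘ₗ (subst μ).toLinearMap)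
    (T := (subst μ).toLinearMap ∘ₗ boundary) fun x ↦ ?_) z
  induction x with
  | nil => simp
  | cons a x ih =>
    simp only [LinearMap.comp_apply, AlgHom.toLinearMap_apply] at ih ⊢
    rw [subst_word_cons, boundary_mul_of_mem_convexHull (hμ a), ih, word_cons,
      boundary_letter_mul, map_sub, map_mul, subst_letter]

/-- The prism over a word, filling the space between the word and its random substitution. -/
noncomputable def prismWord (μ : G → Chain G) : List G → Chain G
  | [] => 0
  | a :: x => letter a * (subst μ (word (a :: x)) - prismWord μ x)

/-- The prism operator, a chain homotopy from the identity to `subst μ`. -/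
noncomputable def prism (μ : G → Chain G) : Chain G →ₗ[ℝ] Chain G := extend (prismWord μ)

@[simp]
theorem prism_one (μ : G → Chain G) : prism μ 1 = 0 := by
  rw [← word_nil, prism, extend_word, prismWord]

theorem prism_letter_mul (μ : G → Chain G) (a : G) (z : Chain G) :
    prism μ (letter a * z) = letter a * (subst μ (letter a * z) - prism μ z) :=
  LinearMap.congr_fun
    (chain_hom_ext (S := prism μ ∘ₗ LinearMap.mulLeft ℝ (letter a))
      (T := LinearMap.mulLeft ℝ (letter a) ∘ₗ
        ((subst μ).toLinearMap ∘ₗ LinearMap.mulLeft ℝ (letter a) - prism μ)) fun x ↦ by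
      simp only [LinearMap.comp_apply, LinearMap.mulLeft_apply, LinearMap.sub_apply,
        AlgHom.toLinearMap_apply, ← word_cons, prism, extend_word, prismWord]) z

theorem boundary_prism_add_prism_boundary {μ : G → Chain G} (hμ : IsRandom μ) (z : Chain G) :
    boundary (prism μ z) + prism μ (boundary z) = subst μ z - z := by
  refine LinearMap.congr_fun (chain_hom_ext
    (S := boundary ∘ₗ prism μ + prism μ ∘ₗ boundary)
    (T := (subst μ).toLinearMap - LinearMap.id) fun x ↦ ?_) z
  induction x with
  | nil => simp
  | cons a x ih =>
    simp only [LinearMap.add_apply, LinearMap.sub_apply, LinearMap.comp_apply,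
      AlgHom.toLinearMap_apply, LinearMap.id_apply] at ih ⊢
    have hsubst : subst μ (letter a * boundary (word x)) =
        subst μ (word x) - boundary (subst μ (letter a * word x)) := by
      rw [boundary_subst hμ, boundary_letter_mul, map_sub]
      abel
    rw [word_cons, prism_letter_mul, boundary_letter_mul, boundary_letter_mul, map_sub, map_sub,
      prism_letter_mul, hsubst, eq_sub_of_add_eq ih]
    noncomm_ring

theorem mul_mem_convexHull_range_word {y z : Chain G}
    (hy : y ∈ convexHull ℝ (Set.range (letter : G → Chain G)))
    (hz : z ∈ convexHull ℝ (Set.range (word : List G → Chain G))) :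
    y * z ∈ convexHull ℝ (Set.range (word : List G → Chain G)) := by
  have hconvex := convex_convexHull ℝ (Set.range (word : List G → Chain G))
  refine convexHull_min (t := (LinearMap.mulRight ℝ z) ⁻¹' _) ?_
    (hconvex.linear_preimage _) hy
  rintro _ ⟨a, rfl⟩
  refine convexHull_min (t := (LinearMap.mulLeft ℝ (letter a)) ⁻¹' _) ?_
    (hconvex.linear_preimage _) hz
  rintro _ ⟨x, rfl⟩
  exact subset_convexHull ℝ _ ⟨a :: x, word_cons a x⟩

theorem subst_word_mem_convexHull {μ : G → Chain G} (hμ : IsRandom μ) (x : List G) :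
    subst μ (word x) ∈ convexHull ℝ (Set.range (word : List G → Chain G)) := by
  induction x with
  | nil => exact subset_convexHull ℝ _ ⟨[], by simp⟩
  | cons a x ih =>
    rw [subst_word_cons]
    exact mul_mem_convexHull_range_word (hμ a) ih

theorem extend_mem {B : Set W} (hB : Convex ℝ B) {c : List G → W} (hc : ∀ x, c x ∈ B)
    {z : Chain G} (hz : z ∈ convexHull ℝ (Set.range (word : List G → Chain G))) :
    extend c z ∈ B := by
  refine convexHull_min (t := extend c ⁻¹' B) ?_ (hB.linear_preimage _) hz
  rintro _ ⟨x, rfl⟩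
  simpa using hc x

theorem norm_extend_prism_word_le {E : Type*} [SeminormedAddCommGroup E] [NormedSpace ℝ E]
    {μ : G → Chain G} (hμ : IsRandom μ) {c : List G → E} {C : ℝ} (hc : ∀ x, ‖c x‖ ≤ C)
    (x : List G) : ‖extend c (prism μ (word x))‖ ≤ x.length * C := by
  induction x generalizing c with
  | nil => simp
  | cons a x ih =>
    rw [word_cons, prism_letter_mul, mul_sub, map_sub, extend_letter_mul c a (prism μ _),
      List.length_cons, Nat.cast_add_one, add_one_mul, add_comm]
    refine (norm_sub_le _ _).trans (add_le_add ?_ (ih fun y ↦ hc (a :: y)))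
    have hmem : letter a * subst μ (letter a * word x) ∈ convexHull ℝ (Set.range word) :=
      mul_mem_convexHull_range_word (subset_convexHull ℝ _ ⟨a, rfl⟩)
        (word_cons a x ▸ subst_word_mem_convexHull hμ (a :: x))
    simpa using extend_mem (convex_closedBall (0 : E) C) (by simpa using hc) hmem

end Chains

section Cochains

variable {G : Type*} {W : Type*} [AddCommGroup W] [Module ℝ W]

/-- The map of cochains induced by a linear map of chains. -/
noncomputable def pullback (T : Chain G →ₗ[ℝ] Chain G) : (List G → W) →ₗ[ℝ] (List G → W) :=
  extend.symm.toLinearMap ∘ₗ LinearMap.lcomp ℝ W T ∘ₗ extend.toLinearMap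

theorem extend_pullback (T : Chain G →ₗ[ℝ] Chain G) (c : List G → W) (z : Chain G) :
    extend (pullback T c) z = extend c (T z) := by
  simp [pullback]

theorem pullback_apply (T : Chain G →ₗ[ℝ] Chain G) (c : List G → W) (x : List G) :
    pullback T c x = extend c (T (word x)) := by
  rw [← extend_pullback, extend_word]

theorem pullback_pullback (S T : Chain G →ₗ[ℝ] Chain G) (c : List G → W) :
    pullback S (pullback T c) = pullback (T ∘ₗ S) c := by
  funext x
  rw [pullback_apply, extend_pullback, pullback_apply, LinearMap.comp_apply]

theorem map_pullback {W' : Type*} [AddCommGroup W'] [Module ℝ W'] (L : W →ₗ[ℝ] W')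
    (T : Chain G →ₗ[ℝ] Chain G) (c : List G → W) (x : List G) :
    L (pullback T c x) = pullback T (fun y ↦ L (c y)) x := by
  rw [pullback_apply, map_extend, pullback_apply]

/-- The homogeneous coboundary. -/
noncomputable abbrev coboundary : (List G → W) →ₗ[ℝ] (List G → W) := pullback boundary

theorem coboundary_nil (c : List G → W) : coboundary c [] = 0 := by
  rw [pullback_apply, word_nil, boundary_one, map_zero]

theorem coboundary_cons (c : List G → W) (a : G) (x : List G) :
    coboundary c (a :: x) = c x - coboundary (fun y ↦ c (a :: y)) x := by
  rw [pullback_apply, word_cons, boundary_letter_mul, map_sub, extend_word, extend_letter_mul,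
    pullback_apply]

theorem coboundary_congr {c d : List G → W} {n : ℕ} (h : ∀ y, y.length = n → c y = d y)
    {x : List G} (hx : x.length = n + 1) : coboundary c x = coboundary d x := by
  induction n generalizing c d x with
  | zero =>
    obtain ⟨a, rfl⟩ := List.length_eq_one_iff.1 hx
    simp [coboundary_cons, coboundary_nil, h]
  | succ n ih =>
    obtain ⟨a, x, rfl⟩ := List.exists_cons_of_length_eq_add_one hx
    have hx' : x.length = n + 1 := by simpa using hx
    rw [coboundary_cons, coboundary_cons, h x hx',
      ih (fun y hy ↦ h (a :: y) (by simpa using hy)) hx']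

theorem coboundary_comp_cons {c : List G → W} (hc : coboundary c = 0) (a : G) :
    coboundary (fun y ↦ c (a :: y)) = c := by
  funext x
  have hcons := coboundary_cons c a x
  rw [hc, Pi.zero_apply] at hcons
  exact (sub_eq_zero.1 hcons.symm).symm

theorem pullback_subst_letter_comp (r : G → G) (c : List G → W) (x : List G) :
    pullback (subst fun a ↦ letter (r a)).toLinearMap c x = c (x.map r) := by
  rw [pullback_apply, AlgHom.toLinearMap_apply, subst_letter_comp_word, extend_word]

variable [TopologicalSpace W] [IsTopologicalAddGroup W] [ContinuousSMul ℝ W]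

theorem continuous_pullback (T : Chain G →ₗ[ℝ] Chain G) :
    Continuous (pullback T : (List G → W) → List G → W) := by
  refine continuous_pi fun x ↦ ?_
  have hsum (c : List G → W) := (pullback_apply T c x).trans
    ((MonoidAlgebra.basis (FreeMonoid G) ℝ).constr_apply ℝ c (T (word x)))
  simp only [hsum, Finsupp.sum]
  fun_prop

end Cochains

/-! ### Equivariant and bounded cochains -/

section Translation

variable {G : Type*} [Group G]

/-- Left translation of chains. -/
noncomputable def translate (g : G) : Chain G →ₐ[ℝ] Chain G := subst fun a ↦ letter (g * a)

theorem translate_letter (g a : G) : translate g (letter a) = letter (g * a) := subst_letter _ a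

theorem translate_word (g : G) (x : List G) : translate g (word x) = word (x.map (g * ·)) :=
  subst_letter_comp_word _ x

theorem boundary_translate (g : G) (z : Chain G) :
    boundary (translate g z) = translate g (boundary z) :=
  boundary_subst (isRandom_letter_comp _) z

/-- Equivariance of a substitution under left translation by the elements of `K`. -/
def IsEquivariant (K : Subgroup G) (μ : G → Chain G) : Prop :=
  ∀ g ∈ K, ∀ a, μ (g * a) = translate g (μ a)

variable {K : Subgroup G} {μ : G → Chain G}

theorem subst_translate (hμ : IsEquivariant K μ) {g : G} (hg : g ∈ K) (z : Chain G) :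
    subst μ (translate g z) = translate g (subst μ z) :=
  DFunLike.congr_fun (subst_ext (S := (subst μ).comp (translate g))
    (T := (translate g).comp (subst μ)) fun a ↦ by
      simp only [AlgHom.comp_apply, translate_letter, subst_letter, hμ g hg]) z

theorem prism_translate (hμ : IsEquivariant K μ) {g : G} (hg : g ∈ K) (z : Chain G) :
    prism μ (translate g z) = translate g (prism μ z) := by
  refine LinearMap.congr_fun (chain_hom_ext (S := prism μ ∘ₗ (translate g).toLinearMap)
    (T := (translate g).toLinearMap ∘ₗ prism μ) fun x ↦ ?_) z
  induction x with
  | nil => simp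
  | cons a x ih =>
    simp only [LinearMap.comp_apply, AlgHom.toLinearMap_apply] at ih ⊢
    rw [word_cons, map_mul, translate_letter, prism_letter_mul, prism_letter_mul,
      map_mul (translate g), map_sub (translate g), translate_letter, ← subst_translate hμ hg,
      map_mul (translate g), translate_letter, ih]

end Translation

section EquivariantCochains

variable {G : Type*} [Group G] {W : Type*} [AddCommGroup W] [Module ℝ W] [TopologicalSpace W]

/-- The action of `G` on cochains for which the fixed cochains are the equivariant ones. -/
def cochainAction (π : G →* (W →L[ℝ] W)) : G →* ((List G → W) →L[ℝ] (List G → W)) where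
  toFun g := .pi fun x ↦ (π g).comp (.proj (x.map (g⁻¹ * ·)))
  map_one' := by
    ext c x
    simp
  map_mul' g h := by
    ext c x
    simp [Function.comp_def, mul_assoc]

theorem cochainAction_apply (π : G →* (W →L[ℝ] W)) (g : G) (c : List G → W) (x : List G) :
    cochainAction π g c x = π g (c (x.map (g⁻¹ * ·))) := rfl

theorem pullback_cochainAction (π : G →* (W →L[ℝ] W)) {T : Chain G →ₗ[ℝ] Chain G} {g : G}
    (hT : ∀ z, T (translate g⁻¹ z) = translate g⁻¹ (T z)) (c : List G → W) :
    pullback T (cochainAction π g c) = cochainAction π g (pullback T c) := by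
  have haction (d : List G → W) (z : Chain G) :
      extend (cochainAction π g d) z = π g (extend d (translate g⁻¹ z)) :=
    LinearMap.congr_fun (chain_hom_ext (S := extend (cochainAction π g d))
      (T := (π g).toLinearMap ∘ₗ extend d ∘ₗ (translate g⁻¹).toLinearMap) fun x ↦ by
        simp [cochainAction_apply, translate_word]) z
  funext x
  rw [pullback_apply, haction, ← hT, ← extend_pullback, translate_word, extend_word,
    cochainAction_apply]

/-- The cochains that are equivariant under the elements of `K`. -/
def equivariant (π : G →* (W →L[ℝ] W)) (K : Subgroup G) : Submodule ℝ (List G → W) where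
  carrier := {c | ∀ g ∈ K, ∀ x, c (x.map (g * ·)) = π g (c x)}
  zero_mem' := fun g _ _ ↦ (map_zero (π g)).symm
  add_mem' := fun hc hd g hg x ↦ by
    simp only [Pi.add_apply, hc g hg x, hd g hg x, map_add]
  smul_mem' := fun r _ hc g hg x ↦ by
    simp only [Pi.smul_apply, hc g hg x, map_smul]

variable {π : G →* (W →L[ℝ] W)} {K : Subgroup G} {c : List G → W}

theorem mem_equivariant_iff : c ∈ equivariant π K ↔ ∀ g ∈ K, cochainAction π g c = c := by
  refine forall₂_congr fun g _ ↦ ⟨fun h ↦ funext fun x ↦ ?_, fun h x ↦ ?_⟩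
  · rw [cochainAction_apply, ← h, List.map_map]
    simp [Function.comp_def]
  · conv_lhs => rw [← h, cochainAction_apply, List.map_map]
    simp [Function.comp_def]

theorem cochainAction_mem_equivariant [K.Normal] (g : G)
    (hc : c ∈ equivariant π K) : cochainAction π g c ∈ equivariant π K :=
  mem_equivariant_iff.2 fun k hk ↦ by
    have hconj : k * g = g * (g⁻¹ * k * g) := by group
    have hmem : g⁻¹ * k * g ∈ K := by simpa using ‹K.Normal›.conj_mem k hk g⁻¹
    rw [← mul_apply_eq_comp, ← map_mul, hconj, map_mul,
      mul_apply_eq_comp, mem_equivariant_iff.1 hc _ hmem]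

theorem cochainAction_comm (g g' : G) (hc : c ∈ equivariant π (commutator G)) :
    cochainAction π g (cochainAction π g' c) = cochainAction π g' (cochainAction π g c) := by
  have hcomm : g * g' = g' * g * ⁅g⁻¹, g'⁻¹⁆ := by
    rw [commutatorElement_def]
    group
  have hmem : ⁅g⁻¹, g'⁻¹⁆ ∈ commutator G :=
    Subgroup.commutator_mem_commutator (Subgroup.mem_top _) (Subgroup.mem_top _)
  rw [← mul_apply_eq_comp, ← map_mul, hcomm, map_mul, mul_apply_eq_comp,
    mem_equivariant_iff.1 hc _ hmem, map_mul, mul_apply_eq_comp]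

theorem isClosed_equivariant [T2Space W] (π : G →* (W →L[ℝ] W)) (K : Subgroup G) :
    IsClosed (equivariant π K : Set (List G → W)) := by
  have hinter : (equivariant π K : Set (List G → W)) = ⋂ g ∈ K, {c | cochainAction π g c = c} := by
    ext c
    simp [mem_equivariant_iff]
  rw [hinter]
  exact isClosed_biInter fun g _ ↦ isClosed_eq (cochainAction π g).continuous continuous_id

theorem pullback_mem_equivariant {T : Chain G →ₗ[ℝ] Chain G}
    (hT : ∀ g ∈ K, ∀ z, T (translate g z) = translate g (T z)) (hc : c ∈ equivariant π K) :
    pullback T c ∈ equivariant π K :=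
  mem_equivariant_iff.2 fun g hg ↦ by
    rw [← pullback_cochainAction π (hT g⁻¹ (K.inv_mem hg)), mem_equivariant_iff.1 hc g hg]

end EquivariantCochains

section BoundedCochains

variable {G : Type*} {F : Type*} [NormedAddCommGroup F] [NormedSpace ℝ F]

/-- The cochains `c` with `‖c x‖ ≤ B x` for the dual norm. -/
def boundedBy (B : List G → ℝ) : Set (List G → WeakDual ℝ F) :=
  Set.univ.pi fun x ↦ WeakDual.toStrongDual ⁻¹' Metric.closedBall 0 (B x)

theorem mem_boundedBy {B : List G → ℝ} {c : List G → WeakDual ℝ F} :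
    c ∈ boundedBy B ↔ ∀ x, ‖WeakDual.toStrongDual (c x)‖ ≤ B x := by
  simp [boundedBy, Set.mem_pi]

theorem isCompact_boundedBy (B : List G → ℝ) :
    IsCompact (boundedBy B : Set (List G → WeakDual ℝ F)) :=
  isCompact_univ_pi fun _ ↦ WeakDual.isCompact_closedBall _ _

theorem convex_boundedBy (B : List G → ℝ) :
    Convex ℝ (boundedBy B : Set (List G → WeakDual ℝ F)) :=
  convex_pi fun x _ ↦ (convex_closedBall (0 : StrongDual ℝ F) (B x)).linear_preimage
    (WeakDual.toStrongDual : WeakDual ℝ F ≃ₗ[ℝ] StrongDual ℝ F).toLinearMap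

theorem sub_mem_boundedBy {B B' : List G → ℝ} {c d : List G → WeakDual ℝ F} (hc : c ∈ boundedBy B)
    (hd : d ∈ boundedBy B') : c - d ∈ boundedBy fun x ↦ B x + B' x :=
  mem_boundedBy.2 fun x ↦ (norm_sub_le (WeakDual.toStrongDual (c x)) _).trans
    (add_le_add (mem_boundedBy.1 hc x) (mem_boundedBy.1 hd x))

variable {μ : G → Chain G} {c : List G → WeakDual ℝ F} {C : ℝ}

theorem pullback_subst_mem_boundedBy (hμ : IsRandom μ) (hc : c ∈ boundedBy fun _ ↦ C) :
    pullback (subst μ).toLinearMap c ∈ boundedBy fun _ ↦ C := fun x _ ↦ by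
  rw [pullback_apply]
  exact extend_mem ((convex_closedBall (0 : StrongDual ℝ F) C).linear_preimage
    (WeakDual.toStrongDual : WeakDual ℝ F ≃ₗ[ℝ] StrongDual ℝ F).toLinearMap)
    (fun y ↦ hc y trivial) (subst_word_mem_convexHull hμ x)

theorem pullback_prism_mem_boundedBy (hμ : IsRandom μ) (hc : c ∈ boundedBy fun _ ↦ C) :
    pullback (prism μ) c ∈ boundedBy fun x ↦ x.length * C := by
  refine mem_boundedBy.2 fun x ↦ ?_
  have hmap := map_pullback (WeakDual.toStrongDual : WeakDual ℝ F ≃ₗ[ℝ] StrongDual ℝ F).toLinearMap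
    (prism μ) c x
  rw [pullback_apply (prism μ) (fun y ↦ _)] at hmap
  exact hmap ▸ norm_extend_prism_word_le hμ (mem_boundedBy.1 hc) x

end BoundedCochains

section Homotopy

variable {G : Type*} {W : Type*} [AddCommGroup W] [Module ℝ W] {μ : G → Chain G} {c : List G → W}

theorem coboundary_pullback_subst (hμ : IsRandom μ) (c : List G → W) :
    coboundary (pullback (subst μ).toLinearMap c) =
      pullback (subst μ).toLinearMap (coboundary c) := by
  have hcomm : (subst μ).toLinearMap ∘ₗ boundary = boundary ∘ₗ (subst μ).toLinearMap :=
    LinearMap.ext fun z ↦ (boundary_subst hμ z).symm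
  rw [pullback_pullback, hcomm, pullback_pullback]

theorem pullback_subst_pullback_subst (μ ν : G → Chain G) (c : List G → W) :
    pullback (subst μ).toLinearMap (pullback (subst ν).toLinearMap c) =
      pullback (subst fun a ↦ subst ν (μ a)).toLinearMap c := by
  rw [pullback_pullback, ← AlgHom.comp_toLinearMap, subst_comp_subst]

theorem pullback_subst_eq_add_coboundary (hμ : IsRandom μ) (hc : coboundary c = 0) :
    pullback (subst μ).toLinearMap c = c + coboundary (pullback (prism μ) c) := by
  funext x
  have hboundary : extend c (boundary (prism μ (word x))) = 0 := by
    rw [← extend_pullback, hc, map_zero, LinearMap.zero_apply]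
  have hhomotopy := congrArg (extend c) (boundary_prism_add_prism_boundary hμ (word x))
  rw [map_add, hboundary, zero_add, map_sub, extend_word] at hhomotopy
  rw [Pi.add_apply, pullback_apply, pullback_apply, extend_pullback, hhomotopy,
    AlgHom.toLinearMap_apply, add_sub_cancel]

end Homotopy

section Averages

variable {G : Type*} [Group G] {W : Type*} [AddCommGroup W] [Module ℝ W] [TopologicalSpace W]

/-- The closed convex hull of the images of a cochain under equivariant random substitutions. -/
noncomputable def averages (c : List G → W) : Set (List G → W) :=
  closedConvexHull ℝ {d | ∃ μ, IsRandom μ ∧ IsEquivariant ⊤ μ ∧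
    d = pullback (subst μ).toLinearMap c}

theorem averages_subset {c : List G → W} {T : Set (List G → W)} (hconv : Convex ℝ T)
    (hclosed : IsClosed T)
    (h : ∀ μ, IsRandom μ → IsEquivariant ⊤ μ → pullback (subst μ).toLinearMap c ∈ T) :
    averages c ⊆ T :=
  closedConvexHull_min (by rintro _ ⟨μ, hμ, heq, rfl⟩; exact h μ hμ heq) hconv hclosed

theorem pullback_subst_mem_averages (c : List G → W) {μ : G → Chain G} (hμ : IsRandom μ)
    (heq : IsEquivariant ⊤ μ) : pullback (subst μ).toLinearMap c ∈ averages c :=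
  subset_closedConvexHull ⟨μ, hμ, heq, rfl⟩

theorem averages_nonempty (c : List G → W) : (averages c).Nonempty :=
  ⟨_, pullback_subst_mem_averages c (isRandom_letter_comp id)
    fun g _ a ↦ (translate_letter g a).symm⟩

theorem IsEquivariant.subst_comp {K : Subgroup G} {μ ν : G → Chain G} (hμ : IsEquivariant K μ)
    (hν : IsEquivariant K ν) : IsEquivariant K fun a ↦ subst ν (μ a) := fun g hg a ↦ by
  simp only [hμ g hg, subst_translate hν hg]

theorem averages_subset_equivariant [T2Space W] {π : G →* (W →L[ℝ] W)} {c : List G → W}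
    (hc : c ∈ equivariant π ⊤) : averages c ⊆ equivariant π ⊤ :=
  averages_subset (equivariant π ⊤).convex (isClosed_equivariant π ⊤) fun _ _ heq ↦
    pullback_mem_equivariant (fun _ hg ↦ subst_translate heq hg) hc

variable [IsTopologicalAddGroup W] [ContinuousSMul ℝ W]

theorem mapsTo_averages (c : List G → W) {μ : G → Chain G} (hμ : IsRandom μ)
    (heq : IsEquivariant ⊤ μ) :
    Set.MapsTo (pullback (subst μ).toLinearMap) (averages c) (averages c) := by
  refine averages_subset (T := pullback (subst μ).toLinearMap ⁻¹' averages c)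
    (convex_closedConvexHull.linear_preimage _)
    (isClosed_closedConvexHull.preimage (continuous_pullback _)) fun ν hν hνeq ↦ ?_
  rw [Set.mem_preimage, pullback_subst_pullback_subst]
  exact pullback_subst_mem_averages c (hμ.subst_comp hν) (heq.subst_comp hνeq)

theorem coboundary_eq_zero_of_mem_averages [T2Space W] {c d : List G → W}
    (hc : coboundary c = 0) (hd : d ∈ averages c) : coboundary d = 0 := by
  refine averages_subset (T := {d | coboundary d = 0}) (LinearMap.ker coboundary).convex
    (isClosed_eq (continuous_pullback _) continuous_const) (fun μ hμ _ ↦ ?_) hd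
  rw [Set.mem_ofPred_eq, coboundary_pullback_subst hμ, hc, map_zero]

end Averages

section BoundedAverages

variable {G : Type*} [Group G] {F : Type*} [NormedAddCommGroup F] [NormedSpace ℝ F]
  {c : List G → WeakDual ℝ F} {C : ℝ}

theorem averages_subset_boundedBy (hc : c ∈ boundedBy fun _ ↦ C) :
    averages c ⊆ boundedBy fun _ ↦ C :=
  averages_subset (convex_boundedBy _) (isCompact_boundedBy _).isClosed fun _ hμ _ ↦
    pullback_subst_mem_boundedBy hμ hc

theorem isCompact_averages (hc : c ∈ boundedBy fun _ ↦ C) : IsCompact (averages c) :=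
  (isCompact_boundedBy _).of_isClosed_subset isClosed_closedConvexHull
    (averages_subset_boundedBy hc)

theorem exists_eq_add_coboundary_of_mem_averages {π : G →* (WeakDual ℝ F →L[ℝ] WeakDual ℝ F)}
    (hbdd : c ∈ boundedBy fun _ ↦ C) (heqv : c ∈ equivariant π ⊤) (hc : coboundary c = 0)
    {d : List G → WeakDual ℝ F} (hd : d ∈ averages c) :
    ∃ h ∈ (boundedBy fun x ↦ x.length * C) ∩ (equivariant π ⊤ : Set (List G → WeakDual ℝ F)),
      d = c + coboundary h := by
  set H : Set (List G → WeakDual ℝ F) := (boundedBy fun x ↦ x.length * C) ∩ equivariant π ⊤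
  have hcompact : IsCompact ((fun h ↦ c + coboundary h) '' H) :=
    ((isCompact_boundedBy _).inter_right (isClosed_equivariant π ⊤)).image
      (continuous_const.add (continuous_pullback _))
  have hconvex : Convex ℝ ((fun h ↦ c + coboundary h) '' H) := by
    have hH : Convex ℝ H := (convex_boundedBy _).inter (equivariant π ⊤).convex
    have htranslate := (hH.linear_image coboundary).translate c
    rwa [Set.image_image] at htranslate
  have hsub : averages c ⊆ (fun h ↦ c + coboundary h) '' H :=
    averages_subset hconvex hcompact.isClosed fun μ hμ hμeq ↦
      ⟨pullback (prism μ) c, ⟨pullback_prism_mem_boundedBy hμ hbdd,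
        pullback_mem_equivariant (fun _ hg ↦ prism_translate hμeq hg) heqv⟩,
        (pullback_subst_eq_add_coboundary hμ hc).symm⟩
  obtain ⟨h, hh, rfl⟩ := hsub hd
  exact ⟨h, hh, rfl⟩

end BoundedAverages

/-! ### Harmonic functions at commuting sites -/

section SiteProducts

variable {Γ : Type*} [Monoid Γ] {ι J : Type*}

/-- The product of the letters with index `s` at the sites in the list `l`. -/
def siteProd (τ : J → ι → Γ) (s : ι) (l : List J) : Γ := (l.map (τ · s)).prod

theorem siteProd_append (τ : J → ι → Γ) (s : ι) (l l' : List J) :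
    siteProd τ s (l ++ l') = siteProd τ s l * siteProd τ s l' := by
  simp [siteProd]

theorem siteProd_singleton (τ : J → ι → Γ) (s : ι) (j : J) : siteProd τ s [j] = τ j s := by
  simp [siteProd]

variable {τ : J → ι → Γ}

theorem commute_siteProd (hcomm : ∀ i j, i ≠ j → ∀ s s', Commute (τ i s) (τ j s')) {l : List J}
    {j : J} (hj : j ∉ l) (s s₀ : ι) : Commute (τ j s) (siteProd τ s₀ l) :=
  Commute.list_prod_right _ _ fun y hy ↦ by
    obtain ⟨i, hi, rfl⟩ := List.mem_map.1 hy
    exact hcomm j i (fun h ↦ hj (h ▸ hi)) s s₀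

end SiteProducts

section Harmonic

variable {Γ : Type*} [Monoid Γ] {ι : Type*} [Fintype ι] {V : Type*} [AddCommGroup V] [Module ℝ V]

/-- The functions that are harmonic for the random walk on `Γ` whose step is a uniformly chosen
member of the family `σ`, acting by right multiplication. -/
def harmonic (σ : ι → Γ) : Submodule ℝ (Γ → V) where
  carrier := {ψ | ∀ g, ψ g = uniformMean fun s ↦ ψ (g * σ s)}
  zero_mem' := fun _ ↦ by simp [uniformMean]
  add_mem' := fun hψ hφ g ↦ by
    rw [Pi.add_apply, hψ g, hφ g]
    simp only [uniformMean, Pi.add_apply, Finset.sum_add_distrib, smul_add]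
  smul_mem' := fun r ψ hψ g ↦ (congrArg (r • ·) (hψ g)).trans
    (map_uniformMean (r • LinearMap.id : V →ₗ[ℝ] V) fun s ↦ ψ (g * σ s))

theorem map_mem_harmonic {W : Type*} [AddCommGroup W] [Module ℝ W] (T : V →ₗ[ℝ] W) {σ : ι → Γ}
    {ψ : Γ → V} (hψ : ψ ∈ harmonic σ) : (fun g ↦ T (ψ g)) ∈ harmonic σ := fun g ↦
  (congrArg T (hψ g)).trans (map_uniformMean T _)

theorem comp_mul_right_mem_harmonic {σ : ι → Γ} {ψ : Γ → V} (hψ : ψ ∈ harmonic σ) {z : Γ}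
    (hz : ∀ s, Commute (σ s) z) : (fun g ↦ ψ (g * z)) ∈ harmonic σ := fun g ↦
  (hψ (g * z)).trans <| congrArg uniformMean <| funext fun s ↦ by
    simp only [mul_assoc, (hz s).eq]

variable {J : Type*} {τ : J → ι → Γ}

theorem abs_sub_le_of_mem_harmonic {σ : ι → Γ} {ψ : Γ → ℝ} (hψ : ψ ∈ harmonic σ) {C : ℝ}
    (hC : ∀ g, |ψ g| ≤ C) (s₀ : ι) (g : Γ) :
    |ψ g - (Fintype.card ι : ℝ)⁻¹ * ψ (g * σ s₀)| ≤ (1 - (Fintype.card ι : ℝ)⁻¹) * C := by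
  classical
  have : Nonempty ι := ⟨s₀⟩
  have hcard : (0 : ℝ) < Fintype.card ι := Nat.cast_pos.2 Fintype.card_pos
  have hsplit : ψ g - (Fintype.card ι : ℝ)⁻¹ * ψ (g * σ s₀) =
      (Fintype.card ι : ℝ)⁻¹ * ∑ s ∈ Finset.univ.erase s₀, ψ (g * σ s) := by
    rw [hψ g, uniformMean, smul_eq_mul, ← Finset.add_sum_erase _ _ (Finset.mem_univ s₀)]
    ring
  have hsum : |∑ s ∈ Finset.univ.erase s₀, ψ (g * σ s)| ≤ (Fintype.card ι - 1) * C := by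
    refine (Finset.abs_sum_le_sum_abs _ _).trans
      ((Finset.sum_le_card_nsmul _ _ C fun s _ ↦ hC _).trans_eq ?_)
    rw [Finset.card_erase_of_mem (Finset.mem_univ _), Finset.card_univ, nsmul_eq_mul,
      Nat.cast_sub Fintype.card_pos, Nat.cast_one]
  calc |ψ g - (Fintype.card ι : ℝ)⁻¹ * ψ (g * σ s₀)|
      = (Fintype.card ι : ℝ)⁻¹ * |∑ s ∈ Finset.univ.erase s₀, ψ (g * σ s)| := by
        rw [hsplit, abs_mul, abs_of_pos (inv_pos.2 hcard)]
    _ ≤ (Fintype.card ι : ℝ)⁻¹ * ((Fintype.card ι - 1) * C) := by gcongr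
    _ = (1 - (Fintype.card ι : ℝ)⁻¹) * C := by field_simp

theorem abs_sub_siteProd_le {ψ : Γ → ℝ} {C : ℝ} (hC : ∀ g, |ψ g| ≤ C) (s₀ : ι) {l : List J}
    (hl : ∀ j ∈ l, ψ ∈ harmonic (τ j)) (g : Γ) :
    |ψ g - (Fintype.card ι : ℝ)⁻¹ ^ l.length * ψ (g * siteProd τ s₀ l)| ≤
      (1 - (Fintype.card ι : ℝ)⁻¹ ^ l.length) * C := by
  induction l generalizing g with
  | nil => simp [siteProd]
  | cons j l ih =>
    set p : ℝ := (Fintype.card ι : ℝ)⁻¹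
    have hp : 0 ≤ p := by positivity
    have hhead := abs_sub_le_of_mem_harmonic (hl j List.mem_cons_self) hC s₀ g
    have htail := ih (fun i hi ↦ hl i (List.mem_cons_of_mem j hi)) (g * τ j s₀)
    have hcons : g * siteProd τ s₀ (j :: l) = g * τ j s₀ * siteProd τ s₀ l := by
      simp [siteProd, mul_assoc]
    calc |ψ g - p ^ (j :: l).length * ψ (g * siteProd τ s₀ (j :: l))|
        = |ψ g - p * ψ (g * τ j s₀) +
            p * (ψ (g * τ j s₀) - p ^ l.length * ψ (g * τ j s₀ * siteProd τ s₀ l))| := by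
          rw [hcons, List.length_cons, pow_succ]
          ring_nf
      _ ≤ |ψ g - p * ψ (g * τ j s₀)| +
            p * |ψ (g * τ j s₀) - p ^ l.length * ψ (g * τ j s₀ * siteProd τ s₀ l)| := by
          rw [← abs_of_nonneg hp, ← abs_mul, abs_of_nonneg hp]
          exact abs_add_le _ _
      _ ≤ (1 - p) * C + p * ((1 - p ^ l.length) * C) := by gcongr
      _ = (1 - p ^ (j :: l).length) * C := by
          rw [List.length_cons, pow_succ]
          ring

theorem sqrt_convexCombination_le {P : ℝ} (hP : 0 < P) (hP1 : P ≤ 1) {R : ℝ} (hR : 0 ≤ R)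
    (x a : ℝ) :
    P * √((x + a * ((1 - P) / P)) ^ 2 + R) + (1 - P) * √((x - a) ^ 2 + R) ≤
      √(x ^ 2 + ((1 - P) / P * a ^ 2 + R)) := by
  have hconcave := Real.strictConcaveOn_sqrt.concaveOn.2
    (x := (x + a * ((1 - P) / P)) ^ 2 + R) (y := (x - a) ^ 2 + R)
    (Set.mem_Ici.2 (by positivity)) (Set.mem_Ici.2 (by positivity)) hP.le (sub_nonneg.2 hP1)
    (add_sub_cancel P 1)
  refine hconcave.trans_eq (congrArg _ ?_)
  simp only [smul_eq_mul]
  field_simp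
  ring

theorem add_sum_siteProd_mem_harmonic (hcomm : ∀ i j, i ≠ j → ∀ s s', Commute (τ i s) (τ j s'))
    {φ : Γ → ℝ} {j : J} (hφ : φ ∈ harmonic (τ j)) {L : ℕ → List J} {n : ℕ}
    (hj : ∀ m ∈ Finset.range n, j ∉ L m) (s₀ : ι) (lam : ℕ → ℝ) (y : ℝ) :
    (fun g ↦ y * φ g + ∑ m ∈ Finset.range n, lam m * (φ (g * siteProd τ s₀ (L m)) - φ g)) ∈
      harmonic (τ j) := by
  have hsum : (fun g ↦ y * φ g + ∑ m ∈ Finset.range n,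
        lam m * (φ (g * siteProd τ s₀ (L m)) - φ g)) =
      y • φ + ∑ m ∈ Finset.range n, lam m • ((fun g ↦ φ (g * siteProd τ s₀ (L m))) - φ) := by
    funext g
    simp
  exact hsum ▸ add_mem (Submodule.smul_mem _ _ hφ) (sum_mem fun m hm ↦
    Submodule.smul_mem _ _ (sub_mem
      (comp_mul_right_mem_harmonic hφ fun s ↦ commute_siteProd hcomm (hj m hm) s s₀) hφ))

/-- The **Bessel inequality** for the correlations of a bounded harmonic function with the letters
at disjoint sets of sites. -/
theorem abs_add_sum_siteProd_le (hcomm : ∀ i j, i ≠ j → ∀ s s', Commute (τ i s) (τ j s'))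
    {φ : Γ → ℝ} {C : ℝ} (hC : ∀ g, |φ g| ≤ C) (hφ : ∀ j, φ ∈ harmonic (τ j)) {L : ℕ → List J}
    {w : ℕ} (hw : ∀ k, (L k).length = w) (hL : Pairwise fun k k' ↦ (L k).Disjoint (L k')) (s₀ : ι)
    {P : ℝ} (hP : P = (Fintype.card ι : ℝ)⁻¹ ^ w) (lam : ℕ → ℝ) (n : ℕ) (x : ℝ) (g : Γ) :
    |x * φ g + ∑ m ∈ Finset.range n, lam m * (φ (g * siteProd τ s₀ (L m)) - φ g)| ≤
      C * √(x ^ 2 + (1 - P) / P * ∑ m ∈ Finset.range n, lam m ^ 2) := by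
  have : Nonempty ι := ⟨s₀⟩
  have hP0 : 0 < P := hP ▸ pow_pos (inv_pos.2 (Nat.cast_pos.2 Fintype.card_pos)) w
  have hP1 : P ≤ 1 := hP ▸ pow_le_one₀ (by positivity)
    (inv_le_one_of_one_le₀ (Nat.one_le_cast.2 Fintype.card_pos))
  induction n generalizing x g with
  | zero =>
    simpa [Real.sqrt_sq_eq_abs, abs_mul, mul_comm C] using
      mul_le_mul_of_nonneg_left (hC g) (abs_nonneg x)
  | succ n ih =>
    let ψ (y : ℝ) (g : Γ) : ℝ :=
      y * φ g + ∑ m ∈ Finset.range n, lam m * (φ (g * siteProd τ s₀ (L m)) - φ g)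
    set R := (1 - P) / P * ∑ m ∈ Finset.range n, lam m ^ 2
    have hR0 : 0 ≤ R := mul_nonneg (div_nonneg (sub_nonneg.2 hP1) hP0.le)
      (Finset.sum_nonneg fun _ _ ↦ sq_nonneg _)
    set a := lam n
    set z := siteProd τ s₀ (L n)
    -- `ψ (x - a)` is harmonic at the sites of `L n`, hence its value at `g` exceeds `P` times its
    -- value at `g * z` by at most `1 - P` times its bound.
    have hlast := hw n ▸ abs_sub_siteProd_le (fun g ↦ ih (x - a) g) s₀
      (fun j hj ↦ add_sum_siteProd_mem_harmonic hcomm (hφ j)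
        (fun m hm hjm ↦ hL (Finset.mem_range.1 hm).ne hjm hj) s₀ lam (x - a)) g
    rw [← hP] at hlast
    calc |x * φ g + ∑ m ∈ Finset.range (n + 1), lam m * (φ (g * siteProd τ s₀ (L m)) - φ g)|
        = |P * ψ (x + a * ((1 - P) / P)) (g * z) + (ψ (x - a) g - P * ψ (x - a) (g * z))| := by
          rw [Finset.sum_range_succ]
          simp only [ψ]
          congr 1
          field_simp
          ring
      _ ≤ P * |ψ (x + a * ((1 - P) / P)) (g * z)| + |ψ (x - a) g - P * ψ (x - a) (g * z)| :=
          (abs_add_le _ _).trans_eq (by rw [abs_mul, abs_of_pos hP0])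
      _ ≤ P * (C * √((x + a * ((1 - P) / P)) ^ 2 + R)) + (1 - P) * (C * √((x - a) ^ 2 + R)) :=
          add_le_add (mul_le_mul_of_nonneg_left (ih _ _) hP0.le) hlast
      _ = C * (P * √((x + a * ((1 - P) / P)) ^ 2 + R) + (1 - P) * √((x - a) ^ 2 + R)) := by ring
      _ ≤ C * √(x ^ 2 + ((1 - P) / P * a ^ 2 + R)) :=
          mul_le_mul_of_nonneg_left (sqrt_convexCombination_le hP0 hP1 hR0 x a)
            ((abs_nonneg _).trans (hC 1))
      _ = C * √(x ^ 2 + (1 - P) / P * ∑ m ∈ Finset.range (n + 1), lam m ^ 2) := by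
          rw [Finset.sum_range_succ, mul_add, add_comm R]

theorem sum_sq_sub_siteProd_le (hcomm : ∀ i j, i ≠ j → ∀ s s', Commute (τ i s) (τ j s'))
    {φ : Γ → ℝ} {C : ℝ} (hC : ∀ g, |φ g| ≤ C) (hφ : ∀ j, φ ∈ harmonic (τ j)) {L : ℕ → List J}
    {w : ℕ} (hw : ∀ k, (L k).length = w) (hL : Pairwise fun k k' ↦ (L k).Disjoint (L k')) (s₀ : ι)
    {P : ℝ} (hP : P = (Fintype.card ι : ℝ)⁻¹ ^ w) (g : Γ) (n : ℕ) :
    ∑ m ∈ Finset.range n, (φ (g * siteProd τ s₀ (L m)) - φ g) ^ 2 ≤ C ^ 2 * ((1 - P) / P) := by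
  have : Nonempty ι := ⟨s₀⟩
  have hweight : 0 ≤ (1 - P) / P := by
    have hP1 : P ≤ 1 := hP ▸ pow_le_one₀ (by positivity)
      (inv_le_one_of_one_le₀ (Nat.one_le_cast.2 Fintype.card_pos))
    exact div_nonneg (sub_nonneg.2 hP1) (hP ▸ by positivity)
  have hbessel := abs_add_sum_siteProd_le hcomm hC hφ hw hL s₀ hP
    (fun m ↦ φ (g * siteProd τ s₀ (L m)) - φ g) n 0 g
  simp only [zero_mul, zero_add, ← sq, zero_pow two_ne_zero] at hbessel
  set Q := ∑ m ∈ Finset.range n, (φ (g * siteProd τ s₀ (L m)) - φ g) ^ 2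
  have hQ : 0 ≤ Q := Finset.sum_nonneg fun _ _ ↦ sq_nonneg _
  have hsq : Q ^ 2 ≤ C ^ 2 * ((1 - P) / P * Q) := by
    have h := pow_le_pow_left₀ (abs_nonneg Q) hbessel 2
    rwa [sq_abs, mul_pow, Real.sq_sqrt (mul_nonneg hweight hQ)] at h
  by_contra! hlt
  have hQpos : 0 < Q := (mul_nonneg (sq_nonneg C) hweight).trans_lt hlt
  exact absurd (mul_lt_mul_of_pos_right hlt hQpos) (by linarith)

theorem tendsto_siteProd (hcomm : ∀ i j, i ≠ j → ∀ s s', Commute (τ i s) (τ j s'))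
    {φ : Γ → ℝ} {C : ℝ} (hC : ∀ g, |φ g| ≤ C) (hφ : ∀ j, φ ∈ harmonic (τ j)) {L : ℕ → List J}
    {w : ℕ} (hw : ∀ k, (L k).length = w) (hL : Pairwise fun k k' ↦ (L k).Disjoint (L k')) (s₀ : ι)
    (g : Γ) : Tendsto (fun k ↦ φ (g * siteProd τ s₀ (L k))) atTop (𝓝 (φ g)) := by
  have hsummable := summable_of_sum_range_le (fun _ ↦ sq_nonneg _)
    (sum_sq_sub_siteProd_le hcomm hC hφ hw hL s₀ rfl g)
  refine tendsto_sub_nhds_zero_iff.1 ((tendsto_zero_iff_abs_tendsto_zero _).2 ?_)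
  simpa [Function.comp_def, Real.sqrt_sq_eq_abs] using hsummable.tendsto_atTop_zero.sqrt

end Harmonic

section SmallOpenSets

variable {F : Type*} [NormedAddCommGroup F] [NormedSpace ℝ F]

theorem norm_le_of_tendsto_weakDual {α : Type*} {l : Filter α} [l.NeBot] {f : α → WeakDual ℝ F}
    {e : WeakDual ℝ F} {r : ℝ} (hlim : Tendsto f l (𝓝 e))
    (hf : ∀ᶠ k in l, ‖WeakDual.toStrongDual (f k)‖ ≤ r) : ‖WeakDual.toStrongDual e‖ ≤ r := by
  simpa using (WeakDual.isClosed_closedBall (0 : StrongDual ℝ F) r).mem_of_tendsto hlim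
    (hf.mono fun k hk ↦ by simpa using hk)

/-- This is where separability of the dual enters: by the Baire category theorem, a bounded set in
the dual has nonempty relatively weak-* open subsets of small norm diameter. -/
theorem exists_isOpen_norm_sub_le (hsep : TopologicalSpace.SeparableSpace (StrongDual ℝ F))
    {A : Set (WeakDual ℝ F)} (hA : A.Nonempty) {C : ℝ}
    (hC : ∀ a ∈ A, ‖WeakDual.toStrongDual a‖ ≤ C) {ε : ℝ} (hε : 0 < ε) :
    ∃ U : Set (WeakDual ℝ F), IsOpen U ∧ (A ∩ U).Nonempty ∧
      ∀ a ∈ A ∩ U, ∀ b ∈ A ∩ U, ‖WeakDual.toStrongDual (a - b)‖ ≤ ε := by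
  have hcompact : IsCompact (closure A) :=
    (WeakDual.isCompact_closedBall (𝕜 := ℝ) 0 C).of_isClosed_subset isClosed_closure
      (closure_minimal (fun a ha ↦ by simpa using hC a ha) (WeakDual.isClosed_closedBall 0 C))
  have : CompactSpace (closure A) := isCompact_iff_compactSpace.1 hcompact
  have : Nonempty (closure A) := hA.closure.to_subtype
  obtain ⟨D, hDcount, hDdense⟩ := hsep.exists_countable_dense
  have : Countable D := hDcount.to_subtype
  let ball (e : D) : Set (closure A) :=
    Subtype.val ⁻¹' (WeakDual.toStrongDual ⁻¹' Metric.closedBall (e : StrongDual ℝ F) (ε / 2))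
  have hclosed (e : D) : IsClosed (ball e) :=
    (WeakDual.isClosed_closedBall _ _).preimage continuous_subtype_val
  have hcover : ⋃ e, ball e = Set.univ := Set.eq_univ_of_forall fun x ↦ by
    obtain ⟨e, he, hdist⟩ := hDdense.exists_dist_lt (WeakDual.toStrongDual (x : WeakDual ℝ F))
      (half_pos hε)
    exact Set.mem_iUnion.2 ⟨⟨e, he⟩, hdist.le⟩
  obtain ⟨e, x, hx⟩ := nonempty_interior_of_iUnion_of_closed hclosed hcover
  obtain ⟨U, hUopen, hU⟩ := isOpen_induced_iff.1 (isOpen_interior (s := ball e))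
  have hdist {a : WeakDual ℝ F} (ha : a ∈ A ∩ U) :
      dist (WeakDual.toStrongDual a) (e : StrongDual ℝ F) ≤ ε / 2 :=
    have hball : (⟨a, subset_closure ha.1⟩ : closure A) ∈ ball e :=
      interior_subset ((Set.ext_iff.1 hU _).1 ha.2)
    hball
  refine ⟨U, hUopen, ?_, fun a ha b hb ↦ ?_⟩
  · obtain ⟨a, haU, haA⟩ := mem_closure_iff.1 x.2 U hUopen ((Set.ext_iff.1 hU x).2 hx)
    exact ⟨a, haA, haU⟩
  · rw [map_sub, ← dist_eq_norm]
    exact (dist_triangle_right _ _ _).trans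
      ((add_le_add (hdist ha) (hdist hb)).trans_eq (add_halves ε))

end SmallOpenSets

section Ergodicity

theorem exists_pairwise_disjoint_map_sub (l : List ℤ) :
    ∃ m : ℕ → ℕ, m.Injective ∧ (∀ k, (0 : ℤ) ∉ l.map (· - (m k : ℤ))) ∧
      Pairwise fun k k' ↦ (l.map (· - (m k : ℤ))).Disjoint (l.map (· - (m k' : ℤ))) := by
  obtain ⟨w, hw⟩ := (l.toFinset.image Int.natAbs).exists_le
  have hbound (j : ℤ) (hj : j ∈ l) : |j| ≤ w := by
    have hle := hw j.natAbs (Finset.mem_image_of_mem _ (List.mem_toFinset.2 hj))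
    rw [Int.abs_eq_natAbs]
    exact_mod_cast hle
  have hinj (k k' : ℕ) (h : (2 * w + 1) * (k + 1) = (2 * w + 1) * (k' + 1)) : k = k' :=
    Nat.succ_injective (Nat.eq_of_mul_eq_mul_left (Nat.succ_pos _) h)
  refine ⟨fun k ↦ (2 * w + 1) * (k + 1), fun k k' ↦ hinj k k', fun k hk ↦ ?_,
    fun k k' hk j hj hj' ↦ hk (hinj k k' ?_)⟩
  · obtain ⟨i, hi, hzero⟩ := List.mem_map.1 hk
    obtain rfl := sub_eq_zero.1 hzero
    have habs := (le_abs_self _).trans (hbound _ hi)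
    push_cast at habs
    nlinarith
  · obtain ⟨i, hi, rfl⟩ := List.mem_map.1 hj
    obtain ⟨i', hi', hsub⟩ := List.mem_map.1 hj'
    have hdvd : ((2 * w + 1 : ℕ) : ℤ) ∣ i - i' := ⟨(k + 1 : ℕ) - (k' + 1 : ℕ), by
      push_cast at hsub ⊢
      linarith⟩
    have hlt : |i - i'| < (2 * w + 1 : ℕ) :=
      (abs_sub _ _).trans_lt (by push_cast; linarith [hbound i hi, hbound i' hi'])
    have hzero := Int.eq_zero_of_abs_lt_dvd hdvd hlt
    exact_mod_cast (by linarith : (((2 * w + 1) * (k + 1) : ℕ) : ℤ) = ((2 * w + 1) * (k' + 1) : ℕ))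

variable {Γ : Type*} [Group Γ] {ι : Type*}

theorem map_siteProd_zpow (α : MulAut Γ) (σ : ι → Γ) (m : ℕ) (s : ι) (l : List ℤ) :
    (α ^ m) (siteProd (fun j s ↦ (α ^ j) (σ s)) s (l.map (· - (m : ℤ)))) =
      siteProd (fun j s ↦ (α ^ j) (σ s)) s l := by
  simp only [siteProd, map_list_prod, List.map_map, Function.comp_def, ← MulAut.mul_apply,
    ← zpow_natCast, ← zpow_add, add_sub_cancel]

variable [Fintype ι] {F : Type*} [NormedAddCommGroup F] [NormedSpace ℝ F] {d : Γ → WeakDual ℝ F}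
  {C : ℝ}

theorem tendsto_weakDual_siteProd {J : Type*} {τ : J → ι → Γ}
    (hcomm : ∀ i j, i ≠ j → ∀ s s', Commute (τ i s) (τ j s'))
    (hC : ∀ g, ‖WeakDual.toStrongDual (d g)‖ ≤ C) (hd : ∀ j, d ∈ harmonic (τ j)) {L : ℕ → List J}
    {w : ℕ} (hw : ∀ k, (L k).length = w) (hL : Pairwise fun k k' ↦ (L k).Disjoint (L k')) (s₀ : ι)
    (g : Γ) : Tendsto (fun k ↦ d (g * siteProd τ s₀ (L k))) atTop (𝓝 (d g)) := by
  refine tendsto_iff_forall_eval_tendsto_topDualPairing.2 fun v ↦ ?_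
  refine tendsto_siteProd (C := C * ‖v‖) (φ := fun g ↦ topDualPairing ℝ F (d g) v) hcomm
    (fun g ↦ ?_) (fun j ↦ map_mem_harmonic ((topDualPairing ℝ F).flip v) (hd j)) hw hL s₀ g
  exact ((WeakDual.toStrongDual (d g)).le_opNorm v).trans
    (mul_le_mul_of_nonneg_right (hC g) (norm_nonneg v))

variable {α : MulAut Γ} {σ : ι → Γ}

theorem norm_sub_le_of_forall_harmonic (hsep : TopologicalSpace.SeparableSpace (StrongDual ℝ F))
    (hcomm : ∀ i j : ℤ, i ≠ j → ∀ s s', Commute ((α ^ i) (σ s)) ((α ^ j) (σ s')))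
    (hC : ∀ g, ‖WeakDual.toStrongDual (d g)‖ ≤ C)
    (hd : ∀ j : ℤ, d ∈ harmonic fun s ↦ (α ^ j) (σ s))
    (hα : ∀ g g', ‖WeakDual.toStrongDual (d (α g) - d (α g'))‖ =
      ‖WeakDual.toStrongDual (d g - d g')‖) (s : ι) {ε : ℝ} (hε : 0 < ε) :
    ‖WeakDual.toStrongDual (d (σ s) - d 1)‖ ≤ ε := by
  let τ (j : ℤ) (s : ι) : Γ := (α ^ j) (σ s)
  have hα_pow (m : ℕ) (g g' : Γ) : ‖WeakDual.toStrongDual (d ((α ^ m) g) - d ((α ^ m) g'))‖ =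
      ‖WeakDual.toStrongDual (d g - d g')‖ := by
    induction m with
    | zero => simp
    | succ m ih => rw [pow_succ', MulAut.mul_apply, MulAut.mul_apply, hα, ih]
  obtain ⟨U, hUopen, ⟨_, ⟨l, rfl⟩, hlU⟩, hU⟩ := exists_isOpen_norm_sub_le hsep
    (Set.range_nonempty fun l ↦ d (siteProd τ s l)) (Set.forall_mem_range.2 fun l ↦ hC _) hε
  obtain ⟨m, hm_inj, hm_zero, hm_disj⟩ := exists_pairwise_disjoint_map_sub l
  have hnear : ∀ᶠ k in atTop, d (siteProd τ s (l ++ [(m k : ℤ)])) ∈ U := by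
    have hlim := tendsto_weakDual_siteProd (L := fun k ↦ [(m k : ℤ)]) hcomm hC hd (fun _ ↦ rfl)
      (fun k k' hk ↦ by simpa using hm_inj.ne hk.symm) s (siteProd τ s l)
    simpa only [siteProd_append] using hlim.eventually_mem (hUopen.mem_nhds hlU)
  have hsmall : ∀ᶠ k in atTop, ‖WeakDual.toStrongDual
      (d (σ s * siteProd τ s (l.map (· - (m k : ℤ)))) -
        d (1 * siteProd τ s (l.map (· - (m k : ℤ)))))‖ ≤ ε := by
    filter_upwards [hnear] with k hk
    have hcons : σ s * siteProd τ s (l.map (· - (m k : ℤ))) =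
        siteProd τ s ((l ++ [(m k : ℤ)]).map (· - (m k : ℤ))) := by
      have hswap := (commute_siteProd (τ := τ) hcomm (hm_zero k) s s).eq
      simpa [τ, siteProd_append, siteProd_singleton] using hswap
    rw [one_mul, hcons, ← hα_pow (m k), map_siteProd_zpow, map_siteProd_zpow]
    exact hU _ ⟨⟨_, rfl⟩, hk⟩ _ ⟨⟨l, rfl⟩, hlU⟩
  have hlim (g : Γ) :=
    tendsto_weakDual_siteProd hcomm hC hd (fun _ ↦ List.length_map _) hm_disj s g
  exact norm_le_of_tendsto_weakDual ((hlim (σ s)).sub (hlim 1)) hsmall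

/-- A bounded function harmonic at commuting sites that are permuted by a norm-preserving
automorphism is constant along these sites: multiplication by one letter is, up to a shift of all
the sites, multiplication by a letter at a far away site, which hardly changes the function. -/
theorem map_eq_map_one_of_forall_harmonic
    (hsep : TopologicalSpace.SeparableSpace (StrongDual ℝ F))
    (hcomm : ∀ i j : ℤ, i ≠ j → ∀ s s', Commute ((α ^ i) (σ s)) ((α ^ j) (σ s')))
    (hC : ∀ g, ‖WeakDual.toStrongDual (d g)‖ ≤ C)
    (hd : ∀ j : ℤ, d ∈ harmonic fun s ↦ (α ^ j) (σ s))
    (hα : ∀ g g', ‖WeakDual.toStrongDual (d (α g) - d (α g'))‖ =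
      ‖WeakDual.toStrongDual (d g - d g')‖) (s : ι) : d (σ s) = d 1 := by
  have hnorm : ‖WeakDual.toStrongDual (d (σ s) - d 1)‖ ≤ 0 := le_of_forall_pos_le_add fun ε hε ↦
    (zero_add ε).symm ▸ norm_sub_le_of_forall_harmonic hsep hcomm hC hd hα s hε
  exact sub_eq_zero.1 (WeakDual.toStrongDual.map_eq_zero_iff.1 (norm_le_zero_iff.1 hnorm))

end Ergodicity

/-! ### Random right multiplications -/

section RandomMultiplication

variable {G : Type*} [Group G] {ι κ : Type*} [Fintype ι] [Fintype κ]

/-- The substitution multiplying each letter on the right by a uniformly chosen member of the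
family `y`. -/
noncomputable def randomMul (y : ι → G) (a : G) : Chain G := uniformMean fun i ↦ letter (a * y i)

theorem isRandom_randomMul [Nonempty ι] (y : ι → G) : IsRandom (randomMul y) := fun a ↦
  uniformMean_mem (convex_convexHull ℝ _) fun i ↦ subset_convexHull ℝ _ ⟨a * y i, rfl⟩

theorem isEquivariant_randomMul (K : Subgroup G) (y : ι → G) : IsEquivariant K (randomMul y) :=
  fun g _ a ↦ by
    simp only [randomMul, ← AlgHom.toLinearMap_apply, map_uniformMean]
    simp only [AlgHom.toLinearMap_apply, translate_letter, mul_assoc]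

theorem subst_randomMul (μ : G → Chain G) (y : ι → G) (a : G) :
    subst μ (randomMul y a) = uniformMean fun i ↦ μ (a * y i) := by
  rw [randomMul, ← AlgHom.toLinearMap_apply, map_uniformMean]
  simp only [AlgHom.toLinearMap_apply, subst_letter]

theorem subst_randomMul_word_ofFn (y : ι → G) {N : ℕ} (g : Fin N → G) :
    subst (randomMul y) (word (List.ofFn g)) =
      uniformMean fun s : Fin N → ι ↦ word (List.ofFn fun i ↦ g i * y (s i)) := by
  induction N with
  | zero => simp [uniformMean]
  | succ N ih =>
    rw [List.ofFn_succ, subst_word_cons, ih, randomMul, uniformMean_mul_uniformMean,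
      ← uniformMean_comp_equiv (Fin.consEquiv fun _ ↦ ι)]
    simp [List.ofFn_succ, Fin.consEquiv, ← word_cons]

variable {W : Type*} [AddCommGroup W] [Module ℝ W] [TopologicalSpace W] [IsTopologicalAddGroup W]
  [ContinuousSMul ℝ W]

/-- The operator averaging a cochain over independent right multiplications of the vertices by
members of the family `y`. -/
noncomputable def rightAverage (y : ι → G) : (List G → W) →L[ℝ] (List G → W) :=
  ⟨pullback (subst (randomMul y)).toLinearMap, continuous_pullback _⟩

theorem rightAverage_apply (y : ι → G) (c : List G → W) :
    rightAverage y c = pullback (subst (randomMul y)).toLinearMap c := rfl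

theorem rightAverage_comm {y y' : ι → G} {z z' : κ → G} (h : ∀ i k, y i * z k = z' k * y' i)
    (c : List G → W) :
    rightAverage y (rightAverage z c) = rightAverage z' (rightAverage y' c) := by
  simp only [rightAverage_apply, pullback_subst_pullback_subst, subst_randomMul]
  simp only [randomMul, mul_assoc, h, uniformMean_comm (ι := ι)]

theorem rightAverage_ofFn (y : ι → G) (c : List G → W) {N : ℕ} (g : Fin N → G) :
    rightAverage y c (List.ofFn g) =
      uniformMean fun s : Fin N → ι ↦ c (List.ofFn fun i ↦ g i * y (s i)) := by
  rw [rightAverage_apply, pullback_apply, AlgHom.toLinearMap_apply, subst_randomMul_word_ofFn,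
    map_uniformMean]
  simp only [extend_word]

theorem apply_ofFn_mul_of_rightAverage_eq {t : G} {c : List G → W}
    (hc : rightAverage (fun _ : Unit ↦ t) c = c) {N : ℕ} (g : Fin N → G) :
    c (List.ofFn fun i ↦ g i * t) = c (List.ofFn g) := by
  conv_rhs => rw [← hc, rightAverage_ofFn, uniformMean_const]

theorem comp_ofFn_mem_harmonic {y : ι → G} {c : List G → W} (hc : rightAverage y c = c) (N : ℕ) :
    (fun g : Fin N → G ↦ c (List.ofFn g)) ∈ harmonic fun (s : Fin N → ι) i ↦ y (s i) := fun g ↦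
  (congrFun hc _).symm.trans (rightAverage_ofFn y c g)

theorem mapsTo_averages_rightAverage [Nonempty ι] (c : List G → W) (y : ι → G) :
    Set.MapsTo (rightAverage y) (averages c) (averages c) :=
  mapsTo_averages c (isRandom_randomMul y) (isEquivariant_randomMul ⊤ y)

end RandomMultiplication

section CommutingConjugates

variable {G : Type*} [Group G]

/-- The commuting conjugates condition on a subgroup `K` of `G`: every finite subset of `K`
commutes with all its conjugates by positive powers of some element of `G`. -/
def HasCommutingConjugates (K : Subgroup G) : Prop :=
  ∀ S : Finset G, (S : Set G) ⊆ K →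
    ∃ t : G, ∀ n : ℕ, 0 < n → ∀ s ∈ S, ∀ s' ∈ S, Commute s (t ^ n * s' * (t ^ n)⁻¹)

theorem commute_conj_zpow {ι : Type*} {σ : ι → G} {t : G}
    (ht : ∀ n : ℕ, 0 < n → ∀ s s', Commute (σ s) (t ^ n * σ s' * (t ^ n)⁻¹)) {i j : ℤ}
    (hij : i ≠ j) (s s' : ι) :
    Commute (MulAut.conj (t ^ i) (σ s)) (MulAut.conj (t ^ j) (σ s')) := by
  wlog hlt : i < j generalizing i j s s'
  · exact (this hij.symm s' s (lt_of_le_of_ne (not_lt.1 hlt) hij.symm)).symm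
  obtain ⟨n, rfl⟩ : ∃ n : ℕ, j = i + n := ⟨(j - i).toNat, by omega⟩
  have hcomm := (ht n (by omega) s s').map (MulAut.conj (t ^ i))
  rwa [← MulAut.conj_apply, ← MulAut.mul_apply, ← map_mul, ← zpow_natCast, ← zpow_add] at hcomm

variable {ι : Type*} [Fintype ι] {W : Type*} [AddCommGroup W] [Module ℝ W] [TopologicalSpace W]
  [IsTopologicalAddGroup W] [ContinuousSMul ℝ W]

theorem rightAverage_conj_zpow_comm {σ : ι → G} {t : G}
    (ht : ∀ n : ℕ, 0 < n → ∀ s s', Commute (σ s) (t ^ n * σ s' * (t ^ n)⁻¹)) (i j : ℤ)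
    (c : List G → W) :
    rightAverage (fun s ↦ MulAut.conj (t ^ i) (σ s))
        (rightAverage (fun s ↦ MulAut.conj (t ^ j) (σ s)) c) =
      rightAverage (fun s ↦ MulAut.conj (t ^ j) (σ s))
        (rightAverage (fun s ↦ MulAut.conj (t ^ i) (σ s)) c) := by
  rcases eq_or_ne i j with rfl | hij
  · rfl
  · exact rightAverage_comm (fun s s' ↦ commute_conj_zpow ht hij s s') c

theorem rightAverage_conj_zpow_rightAverage_const (σ : ι → G) (t : G) (j : ℤ) (c : List G → W) :
    rightAverage (fun s ↦ MulAut.conj (t ^ j) (σ s)) (rightAverage (fun _ : Unit ↦ t) c) =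
      rightAverage (fun _ : Unit ↦ t)
        (rightAverage (fun s ↦ MulAut.conj (t ^ (j - 1)) (σ s)) c) :=
  rightAverage_comm (fun s _ ↦ by
    simp only [MulAut.conj_apply]
    group) c

theorem exists_mem_averages_forall_rightAverage_eq [Nonempty ι] [T2Space W]
    {c : List G → W} (hcompact : IsCompact (averages c)) {σ : ι → G} {t : G}
    (ht : ∀ n : ℕ, 0 < n → ∀ s s', Commute (σ s) (t ^ n * σ s' * (t ^ n)⁻¹)) :
    ∃ d ∈ averages c, (∀ j : ℤ, rightAverage (fun s ↦ MulAut.conj (t ^ j) (σ s)) d = d) ∧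
      rightAverage (fun _ : Unit ↦ t) d = d := by
  let A (j : ℤ) : (List G → W) →L[ℝ] (List G → W) :=
    rightAverage fun s ↦ MulAut.conj (t ^ j) (σ s)
  let R : (List G → W) →L[ℝ] (List G → W) := rightAverage fun _ : Unit ↦ t
  let X : Set (List G → W) := averages c ∩ ⋂ j, {d | A j d = d}
  have hX_compact : IsCompact X := hcompact.inter_right
    (isClosed_iInter fun j ↦ isClosed_eq (A j).continuous continuous_id)
  have hX_convex : Convex ℝ X := convex_closedConvexHull.inter <| convex_iInter fun j ↦
    (LinearMap.eqLocus (A j).toLinearMap LinearMap.id).convex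
  have hX_nonempty : X.Nonempty := by
    obtain ⟨d, hd, hfix⟩ := exists_forall_map_eq_self_of_isCompact_of_convex
      hcompact convex_closedConvexHull (averages_nonempty c) A
      (fun _ ↦ mapsTo_averages_rightAverage c _) fun i j d _ ↦ rightAverage_conj_zpow_comm ht i j d
    exact ⟨d, hd, Set.mem_iInter.2 fun j ↦ hfix j⟩
  have hR : Set.MapsTo R X X := fun d ⟨hd, hfix⟩ ↦
    ⟨mapsTo_averages_rightAverage c _ hd, Set.mem_iInter.2 fun j ↦
      (rightAverage_conj_zpow_rightAverage_const σ t j d).trans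
        (congrArg R (Set.mem_iInter.1 hfix (j - 1)))⟩
  obtain ⟨d, ⟨hd, hfix⟩, hRd⟩ :=
    exists_map_eq_self_of_isCompact_of_convex hX_compact hX_convex hX_nonempty R hR
  exact ⟨d, hd, fun j ↦ Set.mem_iInter.1 hfix j, hRd⟩

end CommutingConjugates

section FixedAverages

variable {G : Type*} [Group G] {F : Type*} [NormedAddCommGroup F] [NormedSpace ℝ F]
  {π : G →* (WeakDual ℝ F →L[ℝ] WeakDual ℝ F)} {c : List G → WeakDual ℝ F} {C : ℝ}

theorem exists_mem_averages_forall_ofFn_eq_replicate {ι : Type*} [Finite ι] [Nonempty ι]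
    (hsep : TopologicalSpace.SeparableSpace (StrongDual ℝ F))
    (hπ : ∀ g φ, ‖WeakDual.toStrongDual (π g φ)‖ = ‖WeakDual.toStrongDual φ‖)
    (hbdd : c ∈ boundedBy fun _ ↦ C) (heqv : c ∈ equivariant π ⊤) {σ : ι → G} {t : G}
    (ht : ∀ n : ℕ, 0 < n → ∀ s s', Commute (σ s) (t ^ n * σ s' * (t ^ n)⁻¹)) :
    ∃ d ∈ averages c, ∀ x : List G, (∀ a ∈ x, a ∈ Set.range σ) →
      d x = d (List.replicate x.length 1) := by
  cases nonempty_fintype ι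
  obtain ⟨d, hd, hfix, hR⟩ :=
    exists_mem_averages_forall_rightAverage_eq (isCompact_averages hbdd) ht
  refine ⟨d, hd, fun x hx ↦ ?_⟩
  choose s hs using fun i : Fin x.length ↦ hx x[i] (List.getElem_mem _)
  have hd_bdd := mem_boundedBy.1 (averages_subset_boundedBy hbdd hd)
  have hd_eqv := averages_subset_equivariant heqv hd
  have hd_conj (g : Fin x.length → G) :
      d (List.ofFn (MulAut.conj (fun _ ↦ t) g)) = π t (d (List.ofFn g)) := by
    rw [← hd_eqv t trivial, List.map_ofFn, ← apply_ofFn_mul_of_rightAverage_eq hR]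
    congr 2
    funext i
    simp
  have hmain := map_eq_map_one_of_forall_harmonic (Γ := Fin x.length → G)
    (σ := fun (s : Fin x.length → ι) i ↦ σ (s i)) (d := fun g ↦ d (List.ofFn g)) hsep
    (α := MulAut.conj fun _ ↦ t)
    (fun i j hij s s' ↦ ?_) (fun g ↦ hd_bdd _) (fun j ↦ ?_) (fun g g' ↦ ?_) s
  · simpa [hs, List.ofFn_const, Pi.one_def] using hmain
  · rw [← map_zpow, ← map_zpow]
    exact funext fun k ↦ (commute_conj_zpow ht hij (s k) (s' k)).eq
  · rw [← map_zpow]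
    exact comp_ofFn_mem_harmonic (hfix j) x.length
  · rw [hd_conj, hd_conj, ← map_sub, hπ]

theorem HasCommutingConjugates.exists_mem_averages {K : Subgroup G} (hK : HasCommutingConjugates K)
    (hsep : TopologicalSpace.SeparableSpace (StrongDual ℝ F))
    (hπ : ∀ g φ, ‖WeakDual.toStrongDual (π g φ)‖ = ‖WeakDual.toStrongDual φ‖)
    (hbdd : c ∈ boundedBy fun _ ↦ C) (heqv : c ∈ equivariant π ⊤) :
    ∃ d ∈ averages c, ∀ x : List G, (∀ a ∈ x, a ∈ K) → d x = d (List.replicate x.length 1) := by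
  classical
  have hfinite (U : Finset {x : List G // ∀ a ∈ x, a ∈ K}) :
      (averages c ∩ ⋂ x ∈ U, {d | d x.1 = d (List.replicate x.1.length 1)}).Nonempty := by
    let S : Finset G := insert 1 (U.biUnion fun x ↦ x.1.toFinset)
    have hS : (S : Set G) ⊆ K := by
      intro a ha
      simp only [S, Finset.coe_insert, Set.mem_insert_iff, Finset.mem_coe, Finset.mem_biUnion,
        List.mem_toFinset] at ha
      rcases ha with rfl | ⟨x, _, hax⟩
      exacts [K.one_mem, x.2 a hax]
    obtain ⟨t, ht⟩ := hK S hS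
    have : Nonempty S := ⟨⟨1, Finset.mem_insert_self _ _⟩⟩
    obtain ⟨d, hd, hconst⟩ := exists_mem_averages_forall_ofFn_eq_replicate hsep hπ hbdd heqv
      (σ := fun s : S ↦ (s : G)) fun n hn s s' ↦ ht n hn s s.2 s' s'.2
    refine ⟨d, hd, Set.mem_iInter₂.2 fun x hx ↦ hconst x.1 fun a ha ↦ ⟨⟨a, ?_⟩, rfl⟩⟩
    exact Finset.mem_insert_of_mem (Finset.mem_biUnion.2 ⟨x, hx, List.mem_toFinset.2 ha⟩)
  obtain ⟨d, hd, hconst⟩ := (isCompact_averages hbdd).inter_iInter_nonempty _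
    (fun x ↦ isClosed_eq (continuous_apply _) (continuous_apply _)) hfinite
  exact ⟨d, hd, fun x hx ↦ Set.mem_iInter.1 hconst ⟨x, hx⟩⟩

end FixedAverages

/-! ### Bounded equivariant primitives -/

section Primitive

variable {G : Type*} [Group G]

theorem exists_equivariant_retraction (K : Subgroup G) :
    ∃ r : G → G, (∀ a, r a ∈ K) ∧ ∀ g ∈ K, ∀ a, r (g * a) = g * r a := by
  refine ⟨fun a ↦ a * ((a⁻¹ : G) : G ⧸ K).out, fun a ↦ ?_, fun g hg a ↦ ?_⟩
  · obtain ⟨k, hk⟩ := QuotientGroup.mk_out_eq_mul K a⁻¹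
    simp [hk]
  · have hcoset : (((g * a)⁻¹ : G) : G ⧸ K) = (a⁻¹ : G) :=
      QuotientGroup.eq.2 (by simpa using hg)
    simp only [hcoset, mul_assoc]

theorem coboundary_replicate {W : Type*} [AddCommGroup W] [Module ℝ W] {K : Subgroup G}
    {d : List G → W} (hd : coboundary d = 0)
    (hconst : ∀ x : List G, (∀ a ∈ x, a ∈ K) → d x = d (List.replicate x.length 1)) {r : G → G}
    (hr : ∀ a, r a ∈ K) :
    coboundary (fun x ↦ d (List.replicate (x.length + 1) 1)) =
      d + coboundary (pullback (prism fun a ↦ letter (r a)) d) := by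
  have hrandom := isRandom_letter_comp r
  have hretract : pullback (subst fun a ↦ letter (r a)).toLinearMap d =
      fun x ↦ d (List.replicate x.length 1) := funext fun x ↦ by
    rw [pullback_subst_letter_comp, hconst _ (by simp [hr]), List.length_map]
  have hcocycle : coboundary (fun x : List G ↦ d (List.replicate x.length 1)) = 0 := by
    rw [← hretract, coboundary_pullback_subst hrandom, hd, map_zero]
  rw [← pullback_subst_eq_add_coboundary hrandom hd, hretract]
  exact coboundary_comp_cons hcocycle 1

variable {F : Type*} [NormedAddCommGroup F] [NormedSpace ℝ F]
  {π : G →* (WeakDual ℝ F →L[ℝ] WeakDual ℝ F)} {c : List G → WeakDual ℝ F} {C : ℝ}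

theorem HasCommutingConjugates.exists_mem_equivariant_coboundary_eq {K : Subgroup G}
    (hK : HasCommutingConjugates K) (hsep : TopologicalSpace.SeparableSpace (StrongDual ℝ F))
    (hπ : ∀ g φ, ‖WeakDual.toStrongDual (π g φ)‖ = ‖WeakDual.toStrongDual φ‖)
    (hbdd : c ∈ boundedBy fun _ ↦ C) (heqv : c ∈ equivariant π ⊤) (hc : coboundary c = 0) :
    ∃ b ∈ equivariant π K, (b ∈ boundedBy fun x ↦ C + x.length * C + x.length * C) ∧
      coboundary b = c := by
  obtain ⟨d, hd, hconst⟩ := hK.exists_mem_averages hsep hπ hbdd heqv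
  obtain ⟨h, ⟨hh_bdd, hh_eqv⟩, rfl⟩ := exists_eq_add_coboundary_of_mem_averages hbdd heqv hc hd
  set d := c + coboundary h
  have hd_bdd := averages_subset_boundedBy hbdd hd
  have hd_eqv : d ∈ equivariant π ⊤ := averages_subset_equivariant heqv hd
  have hd_cocycle := coboundary_eq_zero_of_mem_averages hc hd
  obtain ⟨r, hrK, hr⟩ := exists_equivariant_retraction K
  have hrandom := isRandom_letter_comp r
  have hr_eqv : IsEquivariant K fun a ↦ letter (r a) := fun g hg a ↦
    (congrArg letter (hr g hg a)).trans (translate_letter g (r a)).symm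
  let e (x : List G) : WeakDual ℝ F := d (List.replicate (x.length + 1) 1)
  have he_eqv : e ∈ equivariant π K := fun g hg x ↦ by
    rw [← hd_eqv g trivial, hconst (List.map _ _) (by simp [hg])]
    simp [e]
  have he := coboundary_replicate hd_cocycle hconst hrK
  refine ⟨e - pullback (prism fun a ↦ letter (r a)) d - h, sub_mem (sub_mem he_eqv ?_) ?_, ?_, ?_⟩
  · exact pullback_mem_equivariant (fun _ hg ↦ prism_translate hr_eqv hg)
      fun g _ ↦ hd_eqv g trivial
  · exact fun g _ ↦ hh_eqv g trivial
  · have he_bdd : e ∈ boundedBy fun _ ↦ C := fun x _ ↦ hd_bdd _ trivial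
    exact sub_mem_boundedBy
      (sub_mem_boundedBy he_bdd (pullback_prism_mem_boundedBy hrandom hd_bdd)) hh_bdd
  · rw [map_sub, map_sub, he, add_sub_cancel_right]
    exact add_sub_cancel_right c _

theorem exists_mem_equivariant_top_coboundary_eq
    (hπ : ∀ g φ, ‖WeakDual.toStrongDual (π g φ)‖ = ‖WeakDual.toStrongDual φ‖)
    (heqv : c ∈ equivariant π ⊤) {B : ℕ → ℝ} {b : List G → WeakDual ℝ F}
    (hb_eqv : b ∈ equivariant π (commutator G)) (hb_bdd : b ∈ boundedBy fun x ↦ B x.length)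
    (hb : coboundary b = c) :
    ∃ b' ∈ equivariant π ⊤, (b' ∈ boundedBy fun x ↦ B x.length) ∧ coboundary b' = c := by
  let X : Set (List G → WeakDual ℝ F) :=
    ((boundedBy fun x ↦ B x.length) ∩ equivariant π (commutator G)) ∩ {b | coboundary b = c}
  have hcompact : IsCompact X := ((isCompact_boundedBy _).inter_right
    (isClosed_equivariant π _)).inter_right (isClosed_eq (continuous_pullback _) continuous_const)
  have hconvex : Convex ℝ X := ((convex_boundedBy _).inter (equivariant π _).convex).inter
    ((convex_singleton c).linear_preimage coboundary)
  have hmaps (g : G) : Set.MapsTo (cochainAction π g) X X := by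
    rintro b ⟨⟨hb_bdd, hb_eqv⟩, hb⟩
    refine ⟨⟨mem_boundedBy.2 fun x ↦ ?_, cochainAction_mem_equivariant g hb_eqv⟩, ?_⟩
    · simpa only [cochainAction_apply, hπ, List.length_map] using
        mem_boundedBy.1 hb_bdd (x.map (g⁻¹ * ·))
    · rw [Set.mem_ofPred_eq, pullback_cochainAction π (boundary_translate g⁻¹), hb,
        mem_equivariant_iff.1 heqv g trivial]
  obtain ⟨b', ⟨⟨hb'_bdd, _⟩, hb'⟩, hfix⟩ := exists_forall_map_eq_self_of_isCompact_of_convex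
    hcompact hconvex ⟨b, ⟨hb_bdd, hb_eqv⟩, hb⟩ (cochainAction π) hmaps
    fun g g' b hb ↦ cochainAction_comm g g' hb.1.2
  exact ⟨b', mem_equivariant_iff.2 fun g _ ↦ hfix g, hb'_bdd, hb'⟩

end Primitive

/-! ### Homogeneous and inhomogeneous cochains -/

section PartialProducts

variable {G : Type*} [Group G]

theorem map_mul_scanl (g a : G) (l : List G) :
    (l.scanl (· * ·) a).map (g * ·) = l.scanl (· * ·) (g * a) := by
  induction l generalizing a with
  | nil => simp
  | cons b l ih => simp [ih, mul_assoc]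

theorem scanl_ofFn_inv_mul {x : List G} {n : ℕ} (hx : x.length = n + 1) :
    (List.ofFn fun i : Fin n ↦ x[i]⁻¹ * x[(i : ℕ) + 1]).scanl (· * ·) x[0] = x := by
  refine List.ext_getElem (by simp [hx]) fun i hi hi' ↦ ?_
  induction i with
  | zero => simp
  | succ i ih =>
    rw [List.getElem_succ_scanl, ih (by lia) (by lia), List.getElem_ofFn]
    exact mul_inv_cancel_left _ _

theorem scanl_ofFn_succ {n : ℕ} (a : G) (g : Fin (n + 1) → G) :
    (List.ofFn g).scanl (· * ·) a = a :: (List.ofFn fun j ↦ g j.succ).scanl (· * ·) (a * g 0) := by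
  rw [List.ofFn_succ, List.scanl_cons]

/-- The sum is over the faces of the simplex whose vertices are the partial products `a`, `a * g₀`,
`a * g₀ * g₁`, …, except for the face opposite to the vertex `a`. -/
theorem sum_contract_eq_neg_coboundary {W : Type*} [AddCommGroup W] [Module ℝ W] {n : ℕ}
    (c : List G → W) (a : G) (g : Fin (n + 1) → G) :
    (∑ i : Fin n, ((-1 : ℝ) ^ ((i : ℕ) + 1)) •
        c ((List.ofFn fun j : Fin n ↦ if (j : ℕ) < (i : ℕ) then g (Fin.castSucc j)
          else if (j : ℕ) = (i : ℕ) then g (Fin.castSucc j) * g j.succ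
          else g j.succ).scanl (· * ·) a)) +
      ((-1 : ℝ) ^ (n + 1)) • c ((List.ofFn fun j ↦ g (Fin.castSucc j)).scanl (· * ·) a) =
    -coboundary (fun y ↦ c (a :: y)) ((List.ofFn fun j ↦ g j.succ).scanl (· * ·) (a * g 0)) := by
  induction n generalizing c a with
  | zero => simp [coboundary_cons, coboundary_nil]
  | succ n ih =>
    have htail := ih (fun y ↦ c (a :: y)) (a * g 0) fun j ↦ g j.succ
    rw [scanl_ofFn_succ (a * g 0) fun j ↦ g j.succ, coboundary_cons, sub_eq_add_neg,
      ← htail, Fin.sum_univ_succ]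
    simp only [Fin.coe_ofNat_eq_mod, Nat.zero_mod, Nat.zero_lt_succ, Nat.add_right_cancel_iff,
      zero_add, pow_succ, pow_zero, mul_neg, mul_one, mul_assoc, neg_neg, neg_smul, one_smul,
      neg_add_rev, not_lt_zero, add_lt_add_iff_right, ↓reduceIte, Fin.val_eq_zero_iff, Fin.val_succ,
      Fin.succ_ne_zero, Fin.castSucc_zero, Fin.castSucc_succ, List.ofFn_succ, List.scanl_cons,
      Finset.sum_neg_distrib]
    abel

theorem bddDelta_eq_coboundary {E : Type*} [NormedAddCommGroup E] [Module ℝ E] {π : G → E → E}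
    {c : List G → E} (hc : ∀ g x, c (x.map (g * ·)) = π g (c x)) {n : ℕ} (g : Fin (n + 1) → G) :
    bddDelta π n (fun h ↦ c ((List.ofFn h).scanl (· * ·) 1)) g =
      coboundary c ((List.ofFn g).scanl (· * ·) 1) := by
  rw [bddDelta, add_assoc, sum_contract_eq_neg_coboundary, ← hc, map_mul_scanl, scanl_ofFn_succ 1 g,
    coboundary_cons, one_mul, mul_one, sub_eq_add_neg]

end PartialProducts

section Homogenization

variable {G : Type*} [Group G] {W : Type*} [AddCommGroup W] [Module ℝ W] [TopologicalSpace W]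
  {n : ℕ}

/-- The equivariant cochain associated with an inhomogeneous cochain of degree `n`, extended by
zero to the words whose length is not `n + 1`. -/
def homogenize (π : G →* (W →L[ℝ] W)) (f : (Fin n → G) → W) (x : List G) : W :=
  if hx : x.length = n + 1 then π x[0] (f fun i ↦ x[i]⁻¹ * x[(i : ℕ) + 1]) else 0

theorem homogenize_of_length_ne (π : G →* (W →L[ℝ] W)) (f : (Fin n → G) → W) {x : List G}
    (hx : x.length ≠ n + 1) : homogenize π f x = 0 := dif_neg hx

theorem homogenize_scanl_one (π : G →* (W →L[ℝ] W)) (f : (Fin n → G) → W) (g : Fin n → G) :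
    homogenize π f ((List.ofFn g).scanl (· * ·) 1) = f g := by
  simp [homogenize, List.getElem_succ_scanl, -List.getElem_scanl, List.getElem_zero]

theorem homogenize_mem_equivariant (π : G →* (W →L[ℝ] W)) (f : (Fin n → G) → W) :
    homogenize π f ∈ equivariant π ⊤ := fun g _ x ↦ by
  by_cases hx : x.length = n + 1 <;> simp [homogenize, hx, mul_assoc]

theorem coboundary_homogenize_eq_zero {π : G →* (W →L[ℝ] W)} {f : (Fin n → G) → W}
    (h : ∀ g : Fin (n + 1) → G,
      coboundary (homogenize π f) ((List.ofFn g).scanl (· * ·) 1) = 0) :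
    coboundary (homogenize π f) = 0 := by
  funext x
  by_cases hx : x.length = n + 2
  · have heqv : coboundary (homogenize π f) ∈ equivariant π ⊤ :=
      pullback_mem_equivariant (fun g _ ↦ boundary_translate g) (homogenize_mem_equivariant π f)
    rw [← scanl_ofFn_inv_mul hx, ← mul_one x[0], ← map_mul_scanl, heqv _ trivial, h, map_zero,
      Pi.zero_apply]
  · obtain _ | ⟨a, y⟩ := x
    · exact coboundary_nil _
    · rw [coboundary_congr (d := 0) (n := y.length) (fun z hz ↦ homogenize_of_length_ne π f ?_)
        List.length_cons, map_zero]
      exact fun hn ↦ hx (by simp [← hz, hn])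

end Homogenization

section Contragredient

variable {G : Type*} [Group G] {F : Type*} [NormedAddCommGroup F] [NormedSpace ℝ F]

/-- The contragredient action, as an action by weak-* continuous linear maps. -/
noncomputable def weakContragredient (ρ : G →* (F ≃ₗᵢ[ℝ] F)) :
    G →* (WeakDual ℝ F →L[ℝ] WeakDual ℝ F) where
  toFun g :=
    { toFun φ := StrongDual.toWeakDual (contragredient ρ g (WeakDual.toStrongDual φ))
      map_add' _ _ := rfl
      map_smul' _ _ := rfl
      cont := WeakDual.continuous_of_continuous_eval fun v ↦ WeakDual.eval_continuous (ρ g⁻¹ v) }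
  map_one' := ContinuousLinearMap.ext fun φ ↦ DFunLike.ext _ _ fun v ↦
    congrArg φ (by simp only [inv_one, map_one]; rfl)
  map_mul' g h := ContinuousLinearMap.ext fun φ ↦ DFunLike.ext _ _ fun v ↦
    congrArg φ (by simp only [mul_inv_rev, map_mul]; rfl)

theorem norm_weakContragredient (ρ : G →* (F ≃ₗᵢ[ℝ] F)) (g : G) (φ : WeakDual ℝ F) :
    ‖WeakDual.toStrongDual (weakContragredient ρ g φ)‖ = ‖WeakDual.toStrongDual φ‖ :=
  ContinuousLinearMap.opNorm_comp_linearIsometryEquiv _ (ρ g⁻¹)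

theorem homogenize_mem_boundedBy (ρ : G →* (F ≃ₗᵢ[ℝ] F)) {n : ℕ} {f : (Fin n → G) → WeakDual ℝ F}
    {C : ℝ} (hC : ∀ g, ‖WeakDual.toStrongDual (f g)‖ ≤ C) :
    homogenize (weakContragredient ρ) f ∈ boundedBy fun _ ↦ C := mem_boundedBy.2 fun x ↦ by
  by_cases hx : x.length = n + 1
  · rw [homogenize, dif_pos hx, norm_weakContragredient]
    exact hC _
  · rw [homogenize_of_length_ne _ _ hx, map_zero, norm_zero]
    exact (norm_nonneg _).trans (hC 1)

theorem bddDelta_toStrongDual {ρ : G →* (F ≃ₗᵢ[ℝ] F)} {c : List G → WeakDual ℝ F}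
    (hc : c ∈ equivariant (weakContragredient ρ) ⊤) {n : ℕ} (g : Fin (n + 1) → G) :
    bddDelta (contragredient ρ) n
        (fun h ↦ WeakDual.toStrongDual (c ((List.ofFn h).scanl (· * ·) 1))) g =
      WeakDual.toStrongDual (coboundary c ((List.ofFn g).scanl (· * ·) 1)) :=
  (bddDelta_eq_coboundary (π := contragredient ρ) (c := fun x ↦ WeakDual.toStrongDual (c x))
    (fun g x ↦ congrArg WeakDual.toStrongDual (hc g trivial x)) g).trans
    (map_pullback (WeakDual.toStrongDual : WeakDual ℝ F ≃ₗ[ℝ] StrongDual ℝ F).toLinearMap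
      boundary c _).symm

end Contragredient

/-! ### Thompson's group -/

section GermKernel

variable {X : Type*} [TopologicalSpace X]

/-- The group of the permutations of a topological space which are the identity near the point
`e`. -/
def germKernel (e : X) : Subgroup (Equiv.Perm X) where
  carrier := {f | ∀ᶠ x in 𝓝 e, f x = x}
  one_mem' := Eventually.of_forall fun _ ↦ rfl
  mul_mem' {f g} hf hg := by
    filter_upwards [hf, hg] with x hfx hgx
    rw [Equiv.Perm.mul_apply, hgx, hfx]
  inv_mem' hf := hf.mono fun _ hfx ↦ Equiv.Perm.inv_eq_iff_eq.2 hfx.symm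

theorem mem_germKernel {e : X} {f : Equiv.Perm X} : f ∈ germKernel e ↔ ∀ᶠ x in 𝓝 e, f x = x :=
  Iff.rfl

theorem commutatorElement_mem_germKernel {e : X} {f g : Equiv.Perm X}
    (hf : Tendsto ⇑f⁻¹ (𝓝 e) (𝓝 e)) (hg : Tendsto ⇑g⁻¹ (𝓝 e) (𝓝 e))
    (hfg : ∀ᶠ x in 𝓝 e, f (g x) = g (f x)) : ⁅f, g⁆ ∈ germKernel e := by
  filter_upwards [(hf.comp hg).eventually hfg] with x hx
  simpa [commutatorElement_def] using hx

end GermKernel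

section Displacement

variable {X : Type*}

theorem le_pow_apply [Preorder X] {t : Equiv.Perm X} (ht : ∀ x, x ≤ t x) (n : ℕ) (x : X) :
    x ≤ (t ^ n) x := by
  rw [Equiv.Perm.coe_pow]
  exact Function.id_le_iterate_of_id_le ht n x

theorem disjoint_conj [LinearOrder X] {s s' t : Equiv.Perm X} (ht : StrictMono t) {p q : X}
    (hpq : q < t p) (hs : ∀ x, q < x → s x = x) (hs' : ∀ x, x < p → s' x = x) :
    s.Disjoint (t * s' * t⁻¹) := fun x ↦ by
  obtain ⟨y, rfl⟩ := t.surjective x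
  rcases lt_or_ge q (t y) with hy | hy
  · exact Or.inl (hs _ hy)
  · exact Or.inr (by simp [hs' y (ht.lt_iff_lt.1 (hy.trans_lt hpq))])

variable [CompleteLinearOrder X] [TopologicalSpace X] [OrderTopology X]

theorem tendsto_iterate_nhds_top {f : X → X} (hf : Continuous f) (hle : ∀ x, x ≤ f x)
    (hlt : ∀ x, ⊥ < x → x < ⊤ → x < f x) {p : X} (hp : ⊥ < p) :
    Tendsto (fun n ↦ f^[n] p) atTop (𝓝 ⊤) := by
  have hmono : Monotone fun n ↦ f^[n] p :=
    monotone_nat_of_le_succ fun n ↦ (Function.iterate_succ_apply' f n p).symm ▸ hle _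
  have hlim := tendsto_atTop_iSup hmono
  have hfixed : f (⨆ n, f^[n] p) = ⨆ n, f^[n] p := isFixedPt_of_tendsto_iterate hlim hf.continuousAt
  have hpos : ⊥ < ⨆ n, f^[n] p := hp.trans_le (le_iSup (fun n ↦ f^[n] p) 0)
  have htop : ⨆ n, f^[n] p = ⊤ := not_lt_top_iff.1 fun h ↦ (hlt _ hpos h).ne hfixed.symm
  rwa [htop] at hlim

variable [Nontrivial X] {H : Subgroup (Equiv.Perm X)}

theorem exists_forall_lt_or_gt_apply_eq {S : Finset H}
    (hS : ∀ s ∈ S, s.1 ∈ germKernel ⊥ ⊓ germKernel ⊤) :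
    ∃ p > ⊥, ∃ q < ⊤, ∀ s ∈ S, (∀ x < p, s.1 x = x) ∧ ∀ x > q, s.1 x = x := by
  obtain ⟨p, hp, hfix_bot⟩ := nhds_bot_basis.eventually_iff.1
    ((eventually_all_finset S).2 fun s hs ↦ mem_germKernel.1 (hS s hs).1)
  obtain ⟨q, hq, hfix_top⟩ := nhds_top_basis.eventually_iff.1
    ((eventually_all_finset S).2 fun s hs ↦ mem_germKernel.1 (hS s hs).2)
  exact ⟨p, hp, q, hq, fun s hs ↦ ⟨fun _ hx ↦ hfix_bot hx s hs, fun _ hx ↦ hfix_top hx s hs⟩⟩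

/-- Large powers of `t` push the common support of finitely many elements of `K` off itself. -/
theorem hasCommutingConjugates_of_forall_mem_germKernel [DenselyOrdered X] {K : Subgroup H}
    (hK : ∀ s ∈ K, s.1 ∈ germKernel ⊥ ⊓ germKernel ⊤) {t : H} (ht : StrictMono t.1)
    (hle : ∀ x, x ≤ t.1 x) (hlt : ∀ x, ⊥ < x → x < ⊤ → x < t.1 x) :
    HasCommutingConjugates K := by
  intro S hS
  obtain ⟨p, hp, q, hq, hfix⟩ := exists_forall_lt_or_gt_apply_eq fun s hs ↦ hK s (hS hs)
  have hcont : Continuous t.1 := ht.monotone.continuous_of_surjective t.1.surjective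
  obtain ⟨m, hm⟩ := ((tendsto_iterate_nhds_top hcont hle hlt hp).eventually
    (eventually_gt_nhds hq)).exists
  refine ⟨t ^ m, fun n hn s hs s' hs' ↦ Subtype.ext (Equiv.Perm.Disjoint.commute ?_)⟩
  have hpow : StrictMono (((t ^ m) ^ n : H) : Equiv.Perm X) := by
    rw [← pow_mul, Subgroup.coe_pow, Equiv.Perm.coe_pow]
    exact ht.iterate _
  refine disjoint_conj hpow ?_ (hfix s hs).2 (hfix s' hs').1
  obtain ⟨k, rfl⟩ := Nat.exists_eq_add_of_lt hn
  have hpush : q < (t.1 ^ m) p := by rwa [Equiv.Perm.coe_pow]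
  rw [zero_add, pow_succ]
  exact hpush.trans_le (le_pow_apply (le_pow_apply hle m) k _)

end Displacement

section StrictMonoPerm

variable {X : Type*} [LinearOrder X] {f : Equiv.Perm X}

theorem apply_bot_of_strictMono [OrderBot X] (hf : StrictMono f) : f ⊥ = ⊥ :=
  (hf.orderIsoOfSurjective f f.surjective).map_bot

theorem apply_top_of_strictMono [OrderTop X] (hf : StrictMono f) : f ⊤ = ⊤ :=
  (hf.orderIsoOfSurjective f f.surjective).map_top

theorem tendsto_inv_of_strictMono [TopologicalSpace X] [OrderTopology X] (hf : StrictMono f)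
    {e : X} (he : f e = e) : Tendsto ⇑f⁻¹ (𝓝 e) (𝓝 e) := by
  let φ : X ≃o X := hf.orderIsoOfSurjective f f.surjective
  have hφ : ⇑f⁻¹ = φ.symm :=
    funext fun x ↦ Equiv.Perm.inv_eq_iff_eq.2 (φ.apply_symm_apply x).symm
  have hfix : φ.symm e = e := φ.symm_apply_eq.2 he.symm
  simpa only [hφ, hfix] using φ.symm.continuous.tendsto e

end StrictMonoPerm

section ThompsonGroup

open scoped unitInterval

theorem _root_.IsThompson.strictMono {f : Equiv.Perm I} (hf : IsThompson f) : StrictMono f :=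
  fun _ _ h ↦ hf.1 h

theorem _root_.IsThompson.exists_eventually_nhdsGE {f : Equiv.Perm I} (hf : IsThompson f) {e : I}
    (he : e < 1) : ∃ m : ℤ, ∀ᶠ x in 𝓝[≥] e, (f x : ℝ) = f e + (2 : ℝ) ^ m * (x - e) := by
  obtain ⟨-, s, -, haffine⟩ := hf
  have hnear : ∀ᶠ p : I in 𝓝[>] e, ∀ q ∈ s, q ∉ Set.Ioo (e : ℝ) p := by
    refine (eventually_all_finset s).2 fun q _ ↦ ?_
    rcases le_or_gt q e with hq | hq
    · exact Eventually.of_forall fun p hp ↦ hq.not_gt hp.1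
    · filter_upwards [nhdsWithin_le_nhds (continuous_subtype_val.tendsto e |>.eventually
        (eventually_lt_nhds hq))] with p hp hqp
      exact hp.not_gt hqp.2
  have : (𝓝[>] e).NeBot := nhdsGT_neBot_of_exists_gt ⟨1, he⟩
  obtain ⟨p, hbreak, hp⟩ := (hnear.and self_mem_nhdsWithin).exists
  obtain ⟨m, hm⟩ := haffine e p (le_of_lt hp) hbreak
  exact ⟨m, mem_of_superset (Icc_mem_nhdsGE hp) hm⟩

theorem _root_.IsThompson.exists_eventually_nhdsLE {f : Equiv.Perm I} (hf : IsThompson f) {e : I}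
    (he : 0 < e) : ∃ m : ℤ, ∀ᶠ x in 𝓝[≤] e, (f x : ℝ) = f e + (2 : ℝ) ^ m * (x - e) := by
  obtain ⟨-, s, -, haffine⟩ := hf
  have hnear : ∀ᶠ p : I in 𝓝[<] e, ∀ q ∈ s, q ∉ Set.Ioo (p : ℝ) e := by
    refine (eventually_all_finset s).2 fun q _ ↦ ?_
    rcases le_or_gt (e : ℝ) q with hq | hq
    · exact Eventually.of_forall fun p hp ↦ hq.not_gt hp.2
    · filter_upwards [nhdsWithin_le_nhds (continuous_subtype_val.tendsto e |>.eventually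
        (eventually_gt_nhds hq))] with p hp hqp
      exact hp.not_gt hqp.1
  have : (𝓝[<] e).NeBot := nhdsLT_neBot_of_exists_lt ⟨0, he⟩
  obtain ⟨p, hbreak, hp⟩ := (hnear.and self_mem_nhdsWithin).exists
  obtain ⟨m, hm⟩ := haffine p e (le_of_lt hp) hbreak
  have hm_e := hm e ⟨le_of_lt hp, le_rfl⟩
  refine ⟨m, mem_of_superset (Icc_mem_nhdsLE hp) fun x hx ↦ ?_⟩
  rw [Set.mem_ofPred_eq, hm x hx, hm_e]
  ring

theorem commutatorElement_mem_germKernel_of_eventually_affine {f g : Equiv.Perm I}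
    (hf : StrictMono f) (hg : StrictMono g) {e : I} (hfe : f e = e) (hge : g e = e) {a b : ℝ}
    (hfa : ∀ᶠ x in 𝓝 e, (f x : ℝ) = f e + a * (x - e))
    (hgb : ∀ᶠ x in 𝓝 e, (g x : ℝ) = g e + b * (x - e)) : ⁅f, g⁆ ∈ germKernel e := by
  have hf_tendsto : Tendsto f (𝓝 e) (𝓝 e) := by
    simpa [hfe] using (hf.monotone.continuous_of_surjective f.surjective).tendsto e
  have hg_tendsto : Tendsto g (𝓝 e) (𝓝 e) := by
    simpa [hge] using (hg.monotone.continuous_of_surjective g.surjective).tendsto e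
  refine commutatorElement_mem_germKernel (tendsto_inv_of_strictMono hf hfe)
    (tendsto_inv_of_strictMono hg hge) ?_
  filter_upwards [hfa, hgb, hg_tendsto.eventually hfa, hf_tendsto.eventually hgb]
    with x hfx hgx hfgx hgfx
  rw [Subtype.ext_iff, hfgx, hgfx, hfx, hgx, hfe, hge]
  ring

theorem _root_.IsThompson.commutatorElement_mem_germKernel_bot {f g : Equiv.Perm I}
    (hf : IsThompson f) (hg : IsThompson g) : ⁅f, g⁆ ∈ germKernel (⊥ : I) := by
  have hnhds : 𝓝[≥] (⊥ : I) = 𝓝 ⊥ := by rw [Set.Ici_bot, nhdsWithin_univ]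
  obtain ⟨m, hm⟩ := hf.exists_eventually_nhdsGE (bot_lt_top : (⊥ : I) < ⊤)
  obtain ⟨n, hn⟩ := hg.exists_eventually_nhdsGE (bot_lt_top : (⊥ : I) < ⊤)
  rw [hnhds] at hm hn
  exact commutatorElement_mem_germKernel_of_eventually_affine hf.strictMono
    hg.strictMono (apply_bot_of_strictMono hf.strictMono)
    (apply_bot_of_strictMono hg.strictMono) hm hn

theorem _root_.IsThompson.commutatorElement_mem_germKernel_top {f g : Equiv.Perm I}
    (hf : IsThompson f) (hg : IsThompson g) : ⁅f, g⁆ ∈ germKernel (⊤ : I) := by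
  have hnhds : 𝓝[≤] (⊤ : I) = 𝓝 ⊤ := by rw [Set.Iic_top, nhdsWithin_univ]
  obtain ⟨m, hm⟩ := hf.exists_eventually_nhdsLE (bot_lt_top : (⊥ : I) < ⊤)
  obtain ⟨n, hn⟩ := hg.exists_eventually_nhdsLE (bot_lt_top : (⊥ : I) < ⊤)
  rw [hnhds] at hm hn
  exact commutatorElement_mem_germKernel_of_eventually_affine hf.strictMono
    hg.strictMono (apply_top_of_strictMono hf.strictMono)
    (apply_top_of_strictMono hg.strictMono) hm hn

/-- One of the two standard generators of Thompson's group, or its inverse, depending on the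
convention: the slopes are `2` on `[0, 1/4]`, `1` on `[1/4, 1/2]` and `1/2` on `[1/2, 1]`. As it is
concave, it is the minimum of its affine pieces. -/
noncomputable def thompsonGenerator : Equiv.Perm I where
  toFun x := ⟨min (2 * x) (min (x + 1 / 4) ((x + 1) / 2)), by
    obtain ⟨x, hx⟩ := x; grind⟩
  invFun x := ⟨max (x / 2) (max (x - 1 / 4) (2 * x - 1)), by
    obtain ⟨x, hx⟩ := x; grind⟩
  left_inv x := Subtype.ext (by grind)
  right_inv x := Subtype.ext (by grind)

theorem thompsonGenerator_apply (x : I) :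
    (thompsonGenerator x : ℝ) = min (2 * (x : ℝ)) (min (x + 1 / 4) ((x + 1) / 2)) := rfl

theorem isThompson_thompsonGenerator : IsThompson thompsonGenerator := by
  refine ⟨fun x y hxy ↦ ?_, {1 / 4, 1 / 2}, ?_, fun x y _ hbreak ↦ ?_⟩
  · have hxy' : (x : ℝ) < y := hxy
    simp only [thompsonGenerator_apply]
    grind
  · simp only [Finset.forall_mem_insert, Finset.mem_singleton, forall_eq]
    exact ⟨⟨1, 2, by norm_num⟩, ⟨1, 1, by norm_num⟩⟩
  · simp only [Finset.forall_mem_insert, Finset.mem_singleton, forall_eq, Set.mem_Ioo, not_and,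
      not_lt] at hbreak
    obtain ⟨hquarter, hhalf⟩ := hbreak
    simp only [thompsonGenerator_apply]
    rcases lt_or_ge (x : ℝ) (1 / 4) with hx | hx
    · exact ⟨1, fun t ⟨_, _⟩ ↦ by rw [zpow_one]; grind⟩
    rcases lt_or_ge (x : ℝ) (1 / 2) with hx' | hx'
    · exact ⟨0, fun t ⟨_, _⟩ ↦ by rw [zpow_zero]; grind⟩
    · exact ⟨-1, fun t ⟨_, _⟩ ↦ by rw [zpow_neg_one]; grind⟩

theorem le_thompsonGenerator_apply (x : I) : x ≤ thompsonGenerator x := by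
  rw [← Subtype.coe_le_coe, thompsonGenerator_apply]
  grind

theorem lt_thompsonGenerator_apply {x : I} (h0 : 0 < x) (h1 : x < 1) : x < thompsonGenerator x := by
  rw [← Subtype.coe_lt_coe] at *
  rw [thompsonGenerator_apply]
  grind

variable {H : Subgroup (Equiv.Perm I)}

theorem mem_germKernel_of_mem_commutator_thompson (hH : ∀ f ∈ H, IsThompson f) {s : H}
    (hs : s ∈ commutator H) : s.1 ∈ germKernel ⊥ ⊓ germKernel ⊤ := by
  have hle : commutator H ≤ (germKernel ⊥ ⊓ germKernel ⊤).subgroupOf H :=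
    Subgroup.commutator_le.2 fun f _ g _ ↦
      ⟨(hH f f.2).commutatorElement_mem_germKernel_bot (hH g g.2),
        (hH f f.2).commutatorElement_mem_germKernel_top (hH g g.2)⟩
  exact hle hs

theorem hasCommutingConjugates_commutator_thompson (hH : ∀ f, f ∈ H ↔ IsThompson f) :
    HasCommutingConjugates (commutator H) :=
  hasCommutingConjugates_of_forall_mem_germKernel (t := ⟨_, (hH _).2 isThompson_thompsonGenerator⟩)
    (fun _ ↦ mem_germKernel_of_mem_commutator_thompson fun f ↦ (hH f).1)
    isThompson_thompsonGenerator.strictMono le_thompsonGenerator_apply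
    fun _ ↦ lt_thompsonGenerator_apply

end ThompsonGroup

end BoundedCohomology

open BoundedCohomology in
theorem thompsonF_bounded_cohomology_vanishes_general {G : Type*} [Group G]
    (hG : HasCommutingConjugates (commutator G)) {F : Type*} [NormedAddCommGroup F]
    [NormedSpace ℝ F] (hsep : TopologicalSpace.SeparableSpace (F →L[ℝ] ℝ))
    (ρ : G →* (F ≃ₗᵢ[ℝ] F)) : HbVanish (contragredient ρ) := by
  rintro n f ⟨C, hC⟩ hf
  let c := homogenize (weakContragredient ρ) fun g ↦ StrongDual.toWeakDual (f g)
  have heqv : c ∈ equivariant (weakContragredient ρ) ⊤ := homogenize_mem_equivariant _ _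
  have hc_apply (g : Fin (n + 1) → G) :
      WeakDual.toStrongDual (c ((List.ofFn g).scanl (· * ·) 1)) = f g :=
    congrArg WeakDual.toStrongDual (homogenize_scanl_one _ _ g)
  have hbdd : c ∈ boundedBy fun _ ↦ C := homogenize_mem_boundedBy ρ hC
  have hc : coboundary c = 0 := coboundary_homogenize_eq_zero fun g ↦ by
    refine (bddDelta_toStrongDual heqv g).symm.trans ?_
    simp only [hc_apply]
    exact congrFun hf g
  obtain ⟨b₀, hb₀_eqv, hb₀_bdd, hb₀⟩ := hG.exists_mem_equivariant_coboundary_eq hsep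
    (norm_weakContragredient ρ) hbdd heqv hc
  obtain ⟨b, hb_eqv, hb_bdd, hb⟩ := exists_mem_equivariant_top_coboundary_eq
    (B := fun n ↦ C + n * C + n * C) (norm_weakContragredient ρ) heqv hb₀_eqv hb₀_bdd hb₀
  refine ⟨fun h ↦ WeakDual.toStrongDual (b ((List.ofFn h).scanl (· * ·) 1)),
    ⟨C + (n + 1 : ℕ) * C + (n + 1 : ℕ) * C, fun h ↦ ?_⟩, funext fun g ↦ ?_⟩
  · simpa using mem_boundedBy.1 hb_bdd ((List.ofFn h).scanl (· * ·) 1)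
  · rw [bddDelta_toStrongDual hb_eqv, hb, hc_apply]

/-- For Thompson's group `F`, the vanishing `Hb^n(F,E) = 0` holds for
all `n ≥ 1` and all separable dual Banach `F`-modules `E = F₀*` (with the
contragredient action). -/
theorem thompsonF_bounded_cohomology_vanishes.{u}
    (H : Subgroup (Equiv.Perm ↥(Set.Icc (0 : ℝ) 1)))
    (hH : ∀ f, f ∈ H ↔ IsThompson f)
    (F₀ : Type u) [NormedAddCommGroup F₀] [NormedSpace ℝ F₀] [CompleteSpace F₀]
    (ρ : H →* (F₀ ≃ₗᵢ[ℝ] F₀))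
    (hsep : TopologicalSpace.SeparableSpace (F₀ →L[ℝ] ℝ)) :
    HbVanish (contragredient ρ) := by
  exact thompsonF_bounded_cohomology_vanishes_general
    (BoundedCohomology.hasCommutingConjugates_commutator_thompson hH) hsep ρ
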